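/- arXiv:1907.10184 — 2 statements merged into one kernel-verified Lean document; each statement's English description precedes it below -/
import Mathlib

section
/- Let S ⊆ {−1,0,1}^d be a nontrivial reflectable stepset and let α ∈ (ℝ_{>0})^d be a weight vector. Then there exist positive real constants γ₀ and γ₁ such that q_α(n)·S(α⁺)^{−n}·n^{r/2+m} converges to γ₀ as n → ∞ through even integers and converges to γ₁ as n → ∞ through odd integers; in particular q_α(n) grows like a positive constant times S(α⁺)^n·n^{−(r/2)−m} (the constants for the two parities coincide except when a critical point with negative coordinates contributes). -/
/-!
A reflectable stepset is a union of full sign classes: once it is known which coordinates move at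
each time, the signs of the moves are independent and uniform. Hence, given the move times, the
coordinates of a walk are independent simple random walks, and confinement to the orthant is
confinement of each coordinate to the half-line. This gives (`walkCount_eq`)
`q_α(n) = ∑_w ∏_j g_j(N_j(w))`, where `w` runs over all step sequences, `N_j(w)` is the number of
moves of coordinate `j`, and `g_j` is the normalized weighted count of half-line walks. Tilting the
step law by the exponential growth rates of the `g_j`, whose normalizing constant is `S(α⁺)`
(`inventory_eq`), turns `q_α(n) S(α⁺)^{-n}` into the mean of `∏_j H_j(N_j)` with
`H_j(N) = g_j(N) / growth(α_j)^N`.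

In dimension one, removing the last step gives a linear recursion whose inhomogeneous term is a
Catalan probability (`halfLine_succ`), so `g` is a truncated Catalan series (`halfLine_even`).
Depending on whether `α > 1`, `α = 1` or `α < 1`, the series leaves a positive constant, a central
binomial probability, or a tail of order `N^{-3/2}`; so `H_j(N)` is `N^{-e_j}` times a positive
constant depending on the parity of `N`, with `e_j = 0, 1/2, 3/2` respectively, and
`∑ e_j = r/2 + m`.

Finally `N_j / n` concentrates exponentially at a positive mean `p_j`
(`expect_deviation`), so the `N_j^{-e_j}` may be replaced by `(p_j n)^{-e_j}`, and the mean of the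
parity-dependent constants converges along even and along odd `n` by Fourier analysis on `(ℤ/2)^d`
(`tendsto_expect_parity`).
-/

open scoped BigOperators Classical

/-- `S` is a subset of `{-1,0,1}^d`. -/
def IsStepset (d : ℕ) (S : Finset (Fin d → ℤ)) : Prop :=
  ∀ σ ∈ S, ∀ j, σ j = -1 ∨ σ j = 0 ∨ σ j = 1

/-- `S` is invariant under reflection across any axis. -/
def Reflectable (d : ℕ) (S : Finset (Fin d → ℤ)) : Prop :=
  ∀ σ ∈ S, ∀ j, Function.update σ j (-(σ j)) ∈ S

/-- Every coordinate direction is used by some step. -/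
def NontrivialStepset (d : ℕ) (S : Finset (Fin d → ℤ)) : Prop :=
  ∀ j, ∃ σ ∈ S, σ j ≠ 0

/-- All partial sums of the walk lie in the nonnegative orthant. -/
def Confined (d : ℕ) {n : ℕ} (w : Fin n → (Fin d → ℤ)) : Prop :=
  ∀ k : ℕ, k ≤ n → ∀ j,
    0 ≤ ∑ i ∈ Finset.univ.filter (fun i : Fin n => (i : ℕ) < k), w i j

/-- The weighted count `q_α(n)`: the sum over orthant-confined walks of length `n`
of `α^endpoint`. -/
noncomputable def qcount (d : ℕ) (S : Finset (Fin d → ℤ)) (α : Fin d → ℝ) (n : ℕ) : ℝ :=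
  ∑ w ∈ Finset.univ.filter
      (fun w : Fin n → {σ // σ ∈ S} => Confined d (fun i => (w i).1)),
    ∏ j, α j ^ (∑ i, (w i).1 j)

/-- The inventory (characteristic Laurent polynomial) of the stepset. -/
noncomputable def inventory (d : ℕ) (S : Finset (Fin d → ℤ)) (x : Fin d → ℝ) : ℝ :=
  ∑ σ ∈ S, ∏ j, x j ^ (σ j)

open Filter Topology

/-! ### One-dimensional walks -/

/-- Expected value of `α ^ endpoint` for the simple random walk on `ℤ` of length `n` started at `k`,
where walks that leave the nonnegative half-line contribute zero. -/
noncomputable def halfLine (α : ℝ) : ℕ → ℤ → ℝ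
  | 0, k => if k < 0 then 0 else α ^ k
  | n + 1, k => if k < 0 then 0 else (halfLine α n (k - 1) + halfLine α n (k + 1)) / 2

/-- Probability that the simple random walk on `ℤ` started at `k` is at `0` after `n` steps,
having stayed in the nonnegative half-line. -/
noncomputable def excursion : ℕ → ℤ → ℝ
  | 0, k => if k = 0 then 1 else 0
  | n + 1, k => if k < 0 then 0 else (excursion n (k - 1) + excursion n (k + 1)) / 2

/-- Probability that the unrestricted simple random walk on `ℤ` started at `k` is at `0` after
`n` steps. -/
noncomputable def freeWalk : ℕ → ℤ → ℝ
  | 0, k => if k = 0 then 1 else 0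
  | n + 1, k => (freeWalk n (k - 1) + freeWalk n (k + 1)) / 2

/-- The central binomial probability `binom(2k, k) / 4 ^ k`. -/
noncomputable def cbProb (k : ℕ) : ℝ := (Nat.centralBinom k : ℝ) / 4 ^ k

/-- The probability `Catalan(k) / 4 ^ k` that a simple random walk of length `2k` started at `0`
is an excursion. -/
noncomputable def catProb (k : ℕ) : ℝ := cbProb k / (k + 1)

lemma halfLine_neg (α : ℝ) (n : ℕ) {k : ℤ} (hk : k < 0) : halfLine α n k = 0 := by
  cases n <;> simp [halfLine, hk]

lemma excursion_neg (n : ℕ) {k : ℤ} (hk : k < 0) : excursion n k = 0 := by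
  cases n
  · simp [excursion, hk.ne]
  · simp [excursion, hk]

/-- Removing the last step: multiply by the inventory of the step, then remove the walks that
exit, which must have been at `0`. -/
lemma halfLine_succ {α : ℝ} (hα : 0 < α) (n : ℕ) (k : ℤ) :
    halfLine α (n + 1) k = ((α + α⁻¹) * halfLine α n k - α⁻¹ * excursion n k) / 2 := by
  induction n generalizing k with
  | zero =>
    simp only [halfLine, excursion]
    rcases lt_trichotomy k 0 with h | h | h
    · simp [h, h.ne]
    · subst h; simp
    · have h1 : ¬ k < 0 := by omega
      have h2 : ¬ k - 1 < 0 := by omega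
      have h3 : ¬ k + 1 < 0 := by omega
      simp only [h1, h2, h3, h.ne', if_false]
      rw [zpow_sub_one₀ hα.ne', zpow_add_one₀ hα.ne']
      ring
  | succ n ih =>
    rw [halfLine]
    by_cases h : k < 0
    · simp [h, halfLine_neg, excursion_neg]
    · rw [if_neg h, ih, ih, halfLine, excursion, if_neg h, if_neg h]
      ring

lemma halfLine_bounds {α : ℝ} (hα : 0 < α) (h1 : α ≤ 1) (n : ℕ) (k : ℤ) :
    0 ≤ halfLine α n k ∧ halfLine α n k ≤ 1 := by
  induction n generalizing k with
  | zero =>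
    simp only [halfLine]
    split_ifs with h
    · simp
    · lift k to ℕ using by omega
      rw [zpow_natCast]
      exact ⟨by positivity, pow_le_one₀ hα.le h1⟩
  | succ n ih =>
    simp only [halfLine]
    have := ih (k - 1)
    have := ih (k + 1)
    split_ifs with h
    · simp
    · constructor <;> linarith

lemma freeWalk_even (n : ℕ) (k : ℤ) : freeWalk n (-k) = freeWalk n k := by
  induction n generalizing k with
  | zero => simp [freeWalk]
  | succ n ih =>
    rw [freeWalk, freeWalk, ← ih (k - 1), ← ih (k + 1)]
    ring_nf

/-- The method of images: reflect the starting point in the forbidden site `-1`. -/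
lemma excursion_eq (n : ℕ) (k : ℤ) (hk : -1 ≤ k) :
    excursion n k = freeWalk n k - freeWalk n (k + 2) := by
  induction n generalizing k with
  | zero =>
    have : k + 2 ≠ 0 := by omega
    simp [excursion, freeWalk, this]
  | succ n ih =>
    rcases hk.eq_or_lt with rfl | h
    · rw [excursion_neg _ (by norm_num)]
      have := freeWalk_even (n + 1) 1
      rw [this]; norm_num
    · rw [excursion, if_neg (by omega), ih _ (by omega), ih _ (by omega), freeWalk, freeWalk]
      ring_nf

lemma freeWalk_of_lt (n : ℕ) (k : ℤ) (hk : k < -n) : freeWalk n k = 0 := by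
  induction n generalizing k with
  | zero => simp [freeWalk]; push_cast at hk; omega
  | succ n ih =>
    push_cast at hk
    rw [freeWalk, ih _ (by omega), ih _ (by omega)]; simp

lemma freeWalk_choose (n : ℕ) (i : ℕ) : freeWalk n (2 * i - n) = (n.choose i : ℝ) / 2 ^ n := by
  induction n generalizing i with
  | zero =>
    cases i with
    | zero => simp [freeWalk]
    | succ i => simp [freeWalk]; omega
  | succ n ih =>
    rw [freeWalk]
    have h2 : (2 * (i : ℤ) - ((n + 1 : ℕ) : ℤ) + 1) = 2 * i - n := by push_cast; ring
    rw [h2, ih]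
    cases i with
    | zero =>
      rw [freeWalk_of_lt _ _ (by push_cast; omega)]
      simp [pow_succ]; ring
    | succ i =>
      have h1 : (2 * ((i + 1 : ℕ) : ℤ) - ((n + 1 : ℕ) : ℤ) - 1) = 2 * i - n := by push_cast; ring
      rw [h1, ih, Nat.choose_succ_succ]
      push_cast [pow_succ]
      field_simp

lemma freeWalk_odd (n : ℕ) (k : ℤ) (h : Odd (n + k)) : freeWalk n k = 0 := by
  induction n generalizing k with
  | zero =>
    have : k ≠ 0 := by rintro rfl; simp at h
    simp [freeWalk, this]
  | succ n ih =>
    rw [freeWalk, ih, ih]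
    · simp
    · push_cast at h; convert h using 1; ring
    · push_cast at h
      have : (n : ℤ) + (k - 1) = (n + 1 + k) - 2 := by ring
      rw [this]; exact h.sub_even (by decide)

lemma excursion_odd (m : ℕ) : excursion (2 * m + 1) 0 = 0 := by
  rw [excursion_eq _ _ (by norm_num), freeWalk_odd _ _ ⟨m, by push_cast; ring⟩,
    freeWalk_odd _ _ ⟨m + 1, by push_cast; ring⟩, sub_zero]

lemma excursion_even (m : ℕ) : excursion (2 * m) 0 = catProb m := by
  have h1 := freeWalk_choose (2 * m) m
  have h2 := freeWalk_choose (2 * m) (m + 1)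
  have e1 : (2 * (m : ℤ) - ((2 * m : ℕ) : ℤ)) = 0 := by push_cast; ring
  have e2 : (2 * ((m + 1 : ℕ) : ℤ) - ((2 * m : ℕ) : ℤ)) = 0 + 2 := by push_cast; ring
  rw [e1] at h1
  rw [e2] at h2
  rw [excursion_eq _ _ (by norm_num), h1, h2, catProb, cbProb, Nat.centralBinom_eq_two_mul_choose]
  have h3 : ((2 * m).choose (m + 1) : ℝ) * (m + 1) = (2 * m).choose m * m := by
    have := Nat.choose_succ_right_eq (2 * m) m
    have e : 2 * m - m = m := by omega
    rw [e] at this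
    exact_mod_cast this
  have h4 : ((2 * m).choose (m + 1) : ℝ) = (2 * m).choose m * m / (m + 1) := by
    rw [← h3]; field_simp
  rw [h4, pow_mul]
  norm_num
  field_simp
  ring

lemma cbProb_pos (k : ℕ) : 0 < cbProb k := by
  have := Nat.centralBinom_pos k
  unfold cbProb; positivity

lemma catProb_pos (k : ℕ) : 0 < catProb k := by
  have := cbProb_pos k
  unfold catProb; positivity

lemma cbProb_succ (k : ℕ) : cbProb (k + 1) = cbProb k * ((2 * k + 1) / (2 * k + 2)) := by
  have h : ((k : ℝ) + 1) * Nat.centralBinom (k + 1) = 2 * (2 * k + 1) * Nat.centralBinom k := by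
    exact_mod_cast Nat.succ_mul_centralBinom_succ k
  have h' : (Nat.centralBinom (k + 1) : ℝ) = 2 * (2 * k + 1) * Nat.centralBinom k / (k + 1) := by
    rw [← h]; field_simp
  rw [cbProb, cbProb, h', pow_succ]
  field_simp
  ring

lemma catProb_succ (k : ℕ) : catProb (k + 1) = catProb k * ((2 * k + 1) / (2 * k + 4)) := by
  rw [catProb, catProb, cbProb_succ]
  push_cast
  field_simp
  ring

lemma catProb_eq_sub (k : ℕ) : catProb k = 2 * (cbProb k - cbProb (k + 1)) := by
  rw [catProb, cbProb_succ]
  field_simp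
  ring

lemma cbProb_sq_mul_W (k : ℕ) : cbProb k ^ 2 * (2 * k + 1) * Real.Wallis.W k = 1 := by
  induction k with
  | zero => simp [cbProb, Real.Wallis.W]
  | succ k ih =>
    refine Eq.trans ?_ ih
    rw [Real.Wallis.W_succ, cbProb_succ]
    push_cast
    field_simp
    ring

/-- Wallis' product gives the order of the central binomial coefficient. -/
lemma tendsto_cbProb :
    Tendsto (fun k : ℕ => cbProb k * (2 * k + 1 : ℝ) ^ (1 / 2 : ℝ)) atTop
      (𝓝 (√((Real.pi / 2)⁻¹))) := by
  have h := (Real.Wallis.tendsto_W_nhds_pi_div_two.inv₀ (by positivity)).sqrt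
  refine h.congr fun k => ?_
  have h1 := cbProb_sq_mul_W k
  have hW : Real.Wallis.W k ≠ 0 := by
    intro h0; rw [h0] at h1; simp at h1
  have h2 : (Real.Wallis.W k)⁻¹ = cbProb k ^ 2 * (2 * k + 1) := by
    field_simp; linarith
  rw [h2, Real.sqrt_mul (by positivity), Real.sqrt_sq (cbProb_pos k).le, Real.sqrt_eq_rpow]

lemma tendsto_affine_ratio (a b c : ℝ) (ha : 0 < a) (e : ℝ) :
    Tendsto (fun k : ℕ => ((a * k + b) / (a * k + c)) ^ e) atTop (𝓝 1) := by
  have h0 : Tendsto (fun k : ℕ => a * (k : ℝ) + c) atTop atTop :=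
    tendsto_atTop_add_const_right _ _ (tendsto_natCast_atTop_atTop.const_mul_atTop ha)
  have h1 : Tendsto (fun k : ℕ => 1 + (b - c) / (a * k + c)) atTop (𝓝 (1 + 0)) :=
    tendsto_const_nhds.add (h0.const_div_atTop _)
  have h2 : Tendsto (fun k : ℕ => (a * k + b) / (a * k + c)) atTop (𝓝 1) := by
    rw [add_zero] at h1
    refine h1.congr' ?_
    filter_upwards [h0.eventually_gt_atTop 0] with k hk
    field_simp
    ring
  simpa using h2.rpow_const (Or.inl one_ne_zero) (p := e)

lemma tendsto_catProb :
    ∃ c : ℝ, 0 < c ∧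
      Tendsto (fun k : ℕ => catProb k * (2 * k + 1 : ℝ) ^ (3 / 2 : ℝ)) atTop (𝓝 c) := by
  refine ⟨√((Real.pi / 2)⁻¹) * 1 * 2, by positivity, ?_⟩
  have h := (tendsto_cbProb.mul (tendsto_affine_ratio 2 1 2 two_pos 1)).mul_const 2
  refine h.congr fun k => ?_
  have : (2 * k + 1 : ℝ) ^ (3 / 2 : ℝ) = (2 * k + 1 : ℝ) ^ (1 / 2 : ℝ) * (2 * k + 1) := by
    rw [← Real.rpow_add_one (by positivity)]; norm_num
  rw [this, catProb, Real.rpow_one]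
  field_simp

lemma catProb_shift_ratio (i : ℕ) :
    Tendsto (fun k : ℕ => catProb (k + i) / catProb k) atTop (𝓝 1) := by
  induction i with
  | zero =>
    refine tendsto_const_nhds.congr fun k => ?_
    have := (catProb_pos k).ne'
    simp [this]
  | succ i ih =>
    have h := ih.mul (tendsto_affine_ratio 2 (2 * i + 1) (2 * i + 4) two_pos 1)
    rw [one_mul] at h
    refine h.congr fun k => ?_
    rw [← add_assoc k i 1, catProb_succ, Real.rpow_one]
    push_cast
    rw [div_mul_eq_mul_div]
    ring_nf

lemma catProb_antitone : Antitone catProb := by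
  refine antitone_nat_of_succ_le fun k => ?_
  rw [catProb_succ]
  refine mul_le_of_le_one_right (catProb_pos k).le ?_
  rw [div_le_one (by positivity)]
  linarith

lemma catProb_le_one (k : ℕ) : catProb k ≤ 1 := by
  refine (catProb_antitone (Nat.zero_le k)).trans ?_
  simp [catProb, cbProb]

lemma half_inventory_pos {α : ℝ} (hα : 0 < α) : 0 < (α + α⁻¹) / 2 := by positivity

lemma half_inventory_gt {α : ℝ} (hα : 0 < α) (h1 : α ≠ 1) : 1 < (α + α⁻¹) / 2 := by
  have : 0 < (α - 1) ^ 2 := by have := sub_ne_zero.2 h1; positivity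
  rw [lt_div_iff₀ two_pos]
  have e : α + α⁻¹ - 2 = (α - 1) ^ 2 / α := by field_simp; ring
  have : 0 < (α - 1) ^ 2 / α := by positivity
  linarith

lemma halfLine_odd {α : ℝ} (hα : 0 < α) (k : ℕ) :
    halfLine α (2 * k + 1) 0 = halfLine α (2 * (k + 1)) 0 / ((α + α⁻¹) / 2) := by
  have h := halfLine_succ hα (2 * k + 1) 0
  rw [excursion_odd] at h
  rw [show 2 * (k + 1) = 2 * k + 1 + 1 by ring, h]
  have := half_inventory_pos hα
  have : α + α⁻¹ ≠ 0 := by linarith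
  field_simp
  ring

/-- Total weight of the half-line walks of even length, as a truncated Catalan series. -/
lemma halfLine_even {α ν : ℝ} (hα : 0 < α) (hν : ν = (α + α⁻¹) / 2) (k : ℕ) :
    halfLine α (2 * k) 0 = (ν ^ 2) ^ k *
      (1 - (2 * α * ν)⁻¹ * ∑ i ∈ Finset.range k, catProb i * ((ν ^ 2)⁻¹) ^ i) := by
  have hν0 : 0 < ν := hν ▸ half_inventory_pos hα
  induction k with
  | zero => simp [halfLine]
  | succ k ih =>
    have h1 := halfLine_odd hα k
    rw [halfLine_succ hα, excursion_even, ← hν] at h1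
    have h2 : halfLine α (2 * (k + 1)) 0
        = ν * (((α + α⁻¹) * halfLine α (2 * k) 0 - α⁻¹ * catProb k) / 2) := by
      rw [h1]; field_simp
    have h3 : α + α⁻¹ = 2 * ν := by rw [hν]; ring
    rw [h2, h3, ih, Finset.sum_range_succ, inv_pow, pow_succ]
    field_simp
    ring

lemma summable_catProb {x : ℝ} (h0 : 0 ≤ x) (h1 : x < 1) :
    Summable (fun i => catProb i * x ^ i) := by
  refine Summable.of_nonneg_of_le (fun i => ?_) (fun i => ?_) (summable_geometric_of_lt_one h0 h1)
  · have := catProb_pos i; positivity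
  · exact mul_le_of_le_one_left (by positivity) (catProb_le_one i)

/-- Evaluation of the Catalan generating function. For `α < 1` the total weight is bounded, so the
coefficient of the exponentially growing factor in `halfLine_even` must vanish in the limit. -/
lemma tsum_catProb {α ν : ℝ} (hα : 0 < α) (h1 : α < 1) (hν : ν = (α + α⁻¹) / 2) :
    ∑' i, catProb i * ((ν ^ 2)⁻¹) ^ i = 2 * α * ν := by
  have hν1 : 1 < ν := hν ▸ half_inventory_gt hα h1.ne
  have hν0 : 0 < ν := by linarith
  have hx1 : (ν ^ 2)⁻¹ < 1 := inv_lt_one_of_one_lt₀ (by nlinarith)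
  have hs := (summable_catProb (by positivity) hx1).hasSum.tendsto_sum_nat
  have hl : Tendsto (fun k => halfLine α (2 * k) 0 * ((ν ^ 2)⁻¹) ^ k) atTop (𝓝 0) := by
    refine squeeze_zero (fun k => ?_) (fun k => ?_)
      (tendsto_pow_atTop_nhds_zero_of_lt_one (by positivity : (0 : ℝ) ≤ (ν ^ 2)⁻¹) hx1)
    · exact mul_nonneg (halfLine_bounds hα h1.le _ _).1 (by positivity)
    · exact mul_le_of_le_one_left (by positivity) (halfLine_bounds hα h1.le _ _).2
  have hl' := (tendsto_const_nhds (x := (1 : ℝ))).sub (hs.const_mul (2 * α * ν)⁻¹)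
  have := tendsto_nhds_unique hl (hl'.congr fun k => by
    rw [halfLine_even hα hν, inv_pow (ν ^ 2) k]
    field_simp)
  field_simp at this
  field_simp
  linarith

/-- Exponent of the polynomial factor in dimension one. -/
noncomputable def critExp (α : ℝ) : ℝ := if α < 1 then 3 / 2 else if α = 1 then 1 / 2 else 0

/-- Half of the one-dimensional inventory `x + 1/x` at `x = max α 1`. -/
noncomputable def growth (α : ℝ) : ℝ := (max α 1 + (max α 1)⁻¹) / 2

lemma critExp_nonneg (α : ℝ) : 0 ≤ critExp α := by
  unfold critExp; split_ifs <;> norm_num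

lemma growth_pos (α : ℝ) : 0 < growth α := by
  have : 0 < max α 1 := lt_max_of_lt_right one_pos
  unfold growth; positivity

/-- Common form of the asymptotics: even and odd lengths are governed by one sequence `F`. -/
lemma halfLine_asymp {α : ℝ} (hα : 0 < α) :
    ∃ (F : ℕ → ℝ) (b c : ℝ), 0 < b ∧ 0 < c ∧
      Tendsto (fun k : ℕ => F k * (2 * k + 1 : ℝ) ^ critExp α) atTop (𝓝 c) ∧
      (∀ k, halfLine α (2 * k) 0 / growth α ^ (2 * k) = F k) ∧
      (∀ k, halfLine α (2 * k + 1) 0 / growth α ^ (2 * k + 1) = b * F (k + 1)) := by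
  rcases lt_trichotomy α 1 with h1 | h1 | h1
  · obtain ⟨c, hc, hcat⟩ := tendsto_catProb
    set ν := (α + α⁻¹) / 2 with hν
    have hν1 : 1 < ν := half_inventory_gt hα h1.ne
    have hν0 : 0 < ν := by linarith
    have hx1 : (ν ^ 2)⁻¹ < 1 := inv_lt_one_of_one_lt₀ (by nlinarith)
    have hx0 : (0 : ℝ) ≤ (ν ^ 2)⁻¹ := by positivity
    have hg : growth α = 1 := by simp [growth, max_eq_right h1.le]
    have he : critExp α = 3 / 2 := by simp [critExp, h1]
    have htail : ∀ k, halfLine α (2 * k) 0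
        = (2 * α * ν)⁻¹ * ∑' i, catProb (k + i) * ((ν ^ 2)⁻¹) ^ i := by
      intro k
      have h2 := (summable_catProb hx0 hx1).sum_add_tsum_nat_add k
      rw [tsum_catProb hα h1 hν] at h2
      have h3 : ∑' i, catProb (i + k) * ((ν ^ 2)⁻¹) ^ (i + k)
          = ((ν ^ 2)⁻¹) ^ k * ∑' i, catProb (k + i) * ((ν ^ 2)⁻¹) ^ i := by
        rw [← tsum_mul_left]
        congr 1; ext i; rw [add_comm i k, pow_add]; ring
      rw [h3] at h2
      have h4 : ∑ i ∈ Finset.range k, catProb i * ((ν ^ 2)⁻¹) ^ i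
          = 2 * α * ν - ((ν ^ 2)⁻¹) ^ k * ∑' i, catProb (k + i) * ((ν ^ 2)⁻¹) ^ i := by
        linarith
      rw [halfLine_even hα hν, h4, inv_pow (ν ^ 2) k]
      field_simp
      ring
    have hT : Tendsto (fun k : ℕ => ∑' i, catProb (k + i) / catProb k * ((ν ^ 2)⁻¹) ^ i) atTop
        (𝓝 (∑' i, 1 * ((ν ^ 2)⁻¹) ^ i)) := by
      refine tendsto_tsum_of_dominated_convergence (summable_geometric_of_lt_one hx0 hx1)
        (fun i => (catProb_shift_ratio i).mul_const _) (Eventually.of_forall fun k i => ?_)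
      have := catProb_pos k
      have := catProb_pos (k + i)
      rw [Real.norm_of_nonneg (by positivity)]
      refine mul_le_of_le_one_left (by positivity) ?_
      rw [div_le_one (by positivity)]
      exact catProb_antitone (Nat.le_add_right _ _)
    refine ⟨fun k => halfLine α (2 * k) 0, ν⁻¹,
      (2 * α * ν)⁻¹ * (∑' i, 1 * ((ν ^ 2)⁻¹) ^ i) * c, by positivity, ?_, ?_, ?_, ?_⟩
    · simp only [one_mul]
      rw [tsum_geometric_of_lt_one hx0 hx1]
      have : 0 < 1 - (ν ^ 2)⁻¹ := by linarith
      positivity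
    · refine ((hT.const_mul (2 * α * ν)⁻¹).mul hcat).congr fun k => ?_
      beta_reduce
      rw [htail, he]
      have h5 : ∑' i, catProb (k + i) / catProb k * ((ν ^ 2)⁻¹) ^ i
          = (∑' i, catProb (k + i) * ((ν ^ 2)⁻¹) ^ i) / catProb k := by
        rw [div_eq_mul_inv, ← tsum_mul_right]
        congr 1; ext i; ring
      have := (catProb_pos k).ne'
      rw [h5]
      field_simp
    · intro k; simp [hg]
    · intro k; simp only [hg, one_pow, div_one]; rw [halfLine_odd hα]; rw [← hν]; ring
  · subst h1
    have hg : growth 1 = 1 := by norm_num [growth]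
    have he : critExp 1 = 1 / 2 := by simp [critExp]
    have hF : ∀ k, halfLine 1 (2 * k) 0 = cbProb k := by
      intro k
      rw [halfLine_even one_pos (ν := 1) (by norm_num)]
      simp only [one_pow, inv_one, mul_one, one_mul]
      have : ∑ i ∈ Finset.range k, catProb i = 2 * (1 - cbProb k) := by
        induction k with
        | zero => simp [cbProb]
        | succ k ih => rw [Finset.sum_range_succ, ih, catProb_eq_sub]; ring
      rw [this]; ring
    refine ⟨cbProb, 1, √((Real.pi / 2)⁻¹), one_pos, by positivity, ?_, ?_, ?_⟩
    · rw [he]; exact tendsto_cbProb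
    · intro k; simp [hg, hF]
    · intro k; simp only [hg, one_pow, div_one]; rw [halfLine_odd one_pos, hF]; norm_num
  · set ν := (α + α⁻¹) / 2 with hν
    have hν1 : 1 < ν := half_inventory_gt hα h1.ne'
    have hν0 : 0 < ν := by linarith
    have hx1 : (ν ^ 2)⁻¹ < 1 := inv_lt_one_of_one_lt₀ (by nlinarith)
    have hx0 : (0 : ℝ) ≤ (ν ^ 2)⁻¹ := by positivity
    have hg : growth α = ν := by simp [growth, max_eq_left h1.le, hν]
    have he : critExp α = 0 := by simp [critExp, not_lt.2 h1.le, h1.ne']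
    have hs := (summable_catProb hx0 hx1).hasSum.tendsto_sum_nat
    have hval : ∑' i, catProb i * ((ν ^ 2)⁻¹) ^ i = 2 * α⁻¹ * ν :=
      tsum_catProb (inv_pos.2 hα) (inv_lt_one_of_one_lt₀ h1) (by rw [hν, inv_inv]; ring)
    rw [hval] at hs
    refine ⟨fun k => halfLine α (2 * k) 0 / ν ^ (2 * k), 1,
      1 - (2 * α * ν)⁻¹ * (2 * α⁻¹ * ν), one_pos, ?_, ?_, ?_, ?_⟩
    · have : (2 * α * ν)⁻¹ * (2 * α⁻¹ * ν) = α⁻¹ * α⁻¹ := by field_simp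
      rw [this]
      have : α⁻¹ < 1 := inv_lt_one_of_one_lt₀ h1
      have : 0 < α⁻¹ := inv_pos.2 hα
      nlinarith
    · refine ((tendsto_const_nhds (x := (1 : ℝ))).sub (hs.const_mul (2 * α * ν)⁻¹)).congr
        fun k => ?_
      beta_reduce
      rw [he, Real.rpow_zero, mul_one, halfLine_even hα hν, pow_mul]
      field_simp
    · intro k; rw [hg]
    · intro k
      beta_reduce
      rw [hg, halfLine_odd hα, ← hν, one_mul, show 2 * (k + 1) = 2 * k + 1 + 1 by ring,
        pow_succ ν (2 * k + 1)]
      field_simp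

lemma tendsto_of_even_of_odd {f : ℕ → ℝ} {l : ℝ}
    (h0 : Tendsto (fun k => f (2 * k)) atTop (𝓝 l))
    (h1 : Tendsto (fun k => f (2 * k + 1)) atTop (𝓝 l)) : Tendsto f atTop (𝓝 l) := by
  rw [Metric.tendsto_atTop] at *
  intro ε hε
  obtain ⟨a, ha⟩ := h0 ε hε
  obtain ⟨b, hb⟩ := h1 ε hε
  refine ⟨2 * (a + b) + 1, fun n hn => ?_⟩
  rcases Nat.even_or_odd' n with ⟨k, rfl | rfl⟩
  · exact ha k (by omega)
  · exact hb k (by omega)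

/-- One-dimensional asymptotics, with the parity-dependent constant `u + v (-1) ^ N`. -/
lemma halfLine_ratio {α : ℝ} (hα : 0 < α) :
    ∃ u v : ℝ, (∀ N : ℕ, 0 < u + v * (-1) ^ N) ∧
      Tendsto (fun N : ℕ => halfLine α N 0 / growth α ^ N / (u + v * (-1) ^ N)
        * (N : ℝ) ^ critExp α) atTop (𝓝 1) := by
  obtain ⟨F, b, c, hb, hc, hF, h0, h1⟩ := halfLine_asymp hα
  have e0 : (c + b * c) / 2 + (c - b * c) / 2 = c := by ring
  have e1 : (c + b * c) / 2 + (c - b * c) / 2 * (-1) = b * c := by ring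
  refine ⟨(c + b * c) / 2, (c - b * c) / 2, fun N => ?_, ?_⟩
  · rcases Nat.even_or_odd N with h | h
    · rw [h.neg_one_pow, mul_one, e0]; exact hc
    · rw [h.neg_one_pow, e1]; positivity
  · apply tendsto_of_even_of_odd
    · have h := (hF.mul (tendsto_affine_ratio 2 0 1 two_pos (critExp α))).div_const c
      rw [mul_one, div_self hc.ne'] at h
      refine h.congr fun k => ?_
      rw [(even_two_mul k).neg_one_pow, mul_one, e0, h0]
      have : (0 : ℝ) < 2 * k + 1 := by positivity
      rw [add_zero, Real.div_rpow (by positivity) this.le]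
      have := (Real.rpow_pos_of_pos this (critExp α)).ne'
      push_cast
      field_simp
    · have h := ((hF.comp (tendsto_add_atTop_nat 1)).mul
        (tendsto_affine_ratio 2 1 3 two_pos (critExp α))).div_const c
      rw [mul_one, div_self hc.ne'] at h
      refine h.congr fun k => ?_
      rw [(odd_two_mul_add_one k).neg_one_pow, e1, h1]
      have : (0 : ℝ) < 2 * k + 3 := by positivity
      rw [Real.div_rpow (by positivity) this.le]
      have := (Real.rpow_pos_of_pos this (critExp α)).ne'
      have e : (2 * ((k + 1 : ℕ) : ℝ) + 1) = 2 * k + 3 := by push_cast; ring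
      simp only [Function.comp, e]
      push_cast
      field_simp

/-! ### Reduction to independent one-dimensional walks -/

/-- Averaging one coordinate over a reflection does not change the sum over the stepset; doing this
for every coordinate makes the summand depend on the absolute values of the coordinates only. -/
lemma sum_symmetrize {d : ℕ} {S : Finset (Fin d → ℤ)} (hrefl : Reflectable d S)
    (f : Fin d → ℤ → ℝ) :
    ∑ σ : {σ // σ ∈ S}, ∏ j, f j (σ.1 j)
      = ∑ σ : {σ // σ ∈ S}, ∏ j, (f j (σ.1 j) + f j (-σ.1 j)) / 2 := by
  have key : ∀ T : Finset (Fin d), ∑ σ ∈ S, ∏ j, f j (σ j)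
      = ∑ σ ∈ S, ∏ j, (if j ∈ T then (f j (σ j) + f j (-σ j)) / 2 else f j (σ j)) := by
    intro T
    induction T using Finset.induction_on with
    | empty => simp
    | insert a T ha ih =>
      rw [ih]
      set g : (Fin d → ℤ) → ℝ := fun σ =>
        ∏ j, (if j ∈ T then (f j (σ j) + f j (-σ j)) / 2 else f j (σ j)) with hg
      have hinv : ∑ σ ∈ S, g σ = ∑ σ ∈ S, g (Function.update σ a (-σ a)) := by
        refine Finset.sum_nbij' (fun σ => Function.update σ a (-σ a))
          (fun σ => Function.update σ a (-σ a)) (fun σ h => hrefl σ h a) (fun σ h => hrefl σ h a)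
          ?_ ?_ ?_ <;> intro σ _ <;> simp
      have h2 : ∑ σ ∈ S, g σ = ∑ σ ∈ S, (g σ + g (Function.update σ a (-σ a))) / 2 := by
        rw [← Finset.sum_div, Finset.sum_add_distrib, ← hinv]; ring
      rw [h2]
      refine Finset.sum_congr rfl fun σ _ => ?_
      simp only [hg]
      rw [← Finset.mul_prod_erase _ _ (Finset.mem_univ a),
        ← Finset.mul_prod_erase (a := a) (f := fun j => if j ∈ T then
          (f j (Function.update σ a (-σ a) j) + f j (-Function.update σ a (-σ a) j)) / 2
          else f j (Function.update σ a (-σ a) j)) _ (Finset.mem_univ a),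
        ← Finset.mul_prod_erase (a := a) (f := fun j => if j ∈ insert a T then
          (f j (σ j) + f j (-σ j)) / 2 else f j (σ j)) _ (Finset.mem_univ a)]
      have e1 : ∏ j ∈ Finset.univ.erase a, (if j ∈ T then
          (f j (Function.update σ a (-σ a) j) + f j (-Function.update σ a (-σ a) j)) / 2
          else f j (Function.update σ a (-σ a) j))
          = ∏ j ∈ Finset.univ.erase a,
            (if j ∈ T then (f j (σ j) + f j (-σ j)) / 2 else f j (σ j)) := by
        refine Finset.prod_congr rfl fun j hj => ?_
        have := Finset.ne_of_mem_erase hj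
        simp [Function.update_of_ne this]
      have e2 : ∏ j ∈ Finset.univ.erase a, (if j ∈ insert a T then
          (f j (σ j) + f j (-σ j)) / 2 else f j (σ j))
          = ∏ j ∈ Finset.univ.erase a,
            (if j ∈ T then (f j (σ j) + f j (-σ j)) / 2 else f j (σ j)) := by
        refine Finset.prod_congr rfl fun j hj => ?_
        have := Finset.ne_of_mem_erase hj
        simp [this]
      rw [e1, e2]
      simp only [ha, if_false, Finset.mem_insert_self, if_true, Function.update_self]
      ring
  have := key Finset.univ
  simp only [Finset.mem_univ, if_true] at this
  rw [← Finset.sum_coe_sort S, ← Finset.sum_coe_sort S] at this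
  exact this

/-- The weighted count of confined walks started at `p`. -/
noncomputable def walkCount (d : ℕ) (S : Finset (Fin d → ℤ)) (α : Fin d → ℝ) (n : ℕ)
    (p : Fin d → ℤ) : ℝ :=
  ∑ w : Fin n → {σ // σ ∈ S},
    if ∀ k : ℕ, k ≤ n → ∀ j,
        0 ≤ p j + ∑ i ∈ Finset.univ.filter (fun i : Fin n => (i : ℕ) < k), (w i).1 j
    then ∏ j, α j ^ (p j + ∑ i, (w i).1 j) else 0

lemma qcount_eq_walkCount (d : ℕ) (S : Finset (Fin d → ℤ)) (α : Fin d → ℝ) (n : ℕ) :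
    qcount d S α n = walkCount d S α n 0 := by
  rw [qcount, walkCount, Finset.sum_filter]
  simp [Confined]

lemma sum_filter_cons {n : ℕ} (f : Fin (n + 1) → ℤ) (k : ℕ) :
    ∑ i ∈ Finset.univ.filter (fun i : Fin (n + 1) => (i : ℕ) < k + 1), f i
      = f 0 + ∑ i ∈ Finset.univ.filter (fun i : Fin n => (i : ℕ) < k), f i.succ := by
  rw [Finset.sum_filter, Finset.sum_filter, Fin.sum_univ_succ]
  simp

/-- Conditioning on the first step. -/
lemma walkCount_succ (d : ℕ) (S : Finset (Fin d → ℤ)) (α : Fin d → ℝ) (n : ℕ)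
    (p : Fin d → ℤ) :
    walkCount d S α (n + 1) p
      = ∑ σ : {σ // σ ∈ S}, if ∀ j, 0 ≤ p j then walkCount d S α n (p + σ.1) else 0 := by
  rw [walkCount, ← (Fin.consEquiv (fun _ : Fin (n + 1) => {σ // σ ∈ S})).sum_comp,
    Fintype.sum_prod_type]
  refine Finset.sum_congr rfl fun σ _ => ?_
  by_cases hp : ∀ j, 0 ≤ p j
  · rw [if_pos hp, walkCount]
    refine Finset.sum_congr rfl fun w _ => ?_
    have hiff : (∀ k : ℕ, k ≤ n + 1 → ∀ j, 0 ≤ p j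
        + ∑ i ∈ Finset.univ.filter (fun i : Fin (n + 1) => (i : ℕ) < k),
          ((Fin.consEquiv (fun _ : Fin (n + 1) => {σ // σ ∈ S})) (σ, w) i).1 j) ↔
        (∀ k : ℕ, k ≤ n → ∀ j, 0 ≤ (p + σ.1) j
        + ∑ i ∈ Finset.univ.filter (fun i : Fin n => (i : ℕ) < k), (w i).1 j) := by
      constructor
      · intro h k hk j
        have := h (k + 1) (by omega) j
        rw [sum_filter_cons] at this
        simpa [Fin.consEquiv, add_assoc] using this
      · intro h k hk j
        cases k with
        | zero => simpa using hp j
        | succ k =>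
          rw [sum_filter_cons]
          simpa [Fin.consEquiv, add_assoc] using h k (by omega) j
    rw [if_congr hiff ?_ rfl]
    refine Finset.prod_congr rfl fun j _ => ?_
    rw [Fin.sum_univ_succ]
    simp [Fin.consEquiv, add_assoc]
  · rw [if_neg hp]
    refine Finset.sum_eq_zero fun w _ => if_neg fun h => hp fun j => ?_
    simpa using h 0 (by omega) j

lemma halfLine_natAbs (α : ℝ) (n : ℕ) (k x : ℤ) (hx : x = -1 ∨ x = 0 ∨ x = 1) :
    halfLine α (x.natAbs + n) k = ((if 0 ≤ k then halfLine α n (k + x) else 0)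
      + (if 0 ≤ k then halfLine α n (k + -x) else 0)) / 2 := by
  by_cases hk : 0 ≤ k
  · rcases hx with rfl | rfl | rfl
    · simp only [hk, if_true, Int.reduceNeg, Int.natAbs_neg, Int.natAbs_one, add_comm 1 n, halfLine,
        not_lt.2 hk, if_false]
      simp [sub_eq_add_neg]
    · simp [hk]
    · simp only [hk, if_true, Int.natAbs_one, add_comm 1 n, halfLine, not_lt.2 hk, if_false]
      rw [sub_eq_add_neg]; ring
  · simp [hk, halfLine_neg α _ (not_le.1 hk)]

/-- Given which coordinates move at each time, the coordinates of a walk are independent simple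
walks. -/
lemma walkCount_eq {d : ℕ} {S : Finset (Fin d → ℤ)} (hstep : IsStepset d S)
    (hrefl : Reflectable d S) (α : Fin d → ℝ) (n : ℕ) (p : Fin d → ℤ) :
    walkCount d S α n p = ∑ w : Fin n → {σ // σ ∈ S},
      ∏ j, halfLine (α j) (∑ i, ((w i).1 j).natAbs) (p j) := by
  induction n generalizing p with
  | zero =>
    simp only [walkCount, Finset.univ_eq_empty, Finset.sum_empty, Finset.filter_empty,
      Finset.univ_unique, Finset.sum_singleton, halfLine, add_zero]
    by_cases hp : ∀ j, 0 ≤ p j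
    · rw [if_pos (fun _ _ => hp)]
      exact Finset.prod_congr rfl fun j _ => by rw [if_neg (not_lt.2 (hp j))]
    · rw [if_neg (fun h => hp (h 0 le_rfl))]
      push Not at hp
      obtain ⟨j, hj⟩ := hp
      exact (Finset.prod_eq_zero (Finset.mem_univ j) (by rw [if_pos hj])).symm
  | succ n ih =>
    rw [walkCount_succ, ← (Fin.consEquiv (fun _ : Fin (n + 1) => {σ // σ ∈ S})).sum_comp,
      Fintype.sum_prod_type]
    have h1 : ∀ σ : {σ // σ ∈ S}, (if ∀ j, 0 ≤ p j then walkCount d S α n (p + σ.1) else 0)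
        = ∑ w : Fin n → {σ // σ ∈ S}, ∏ j,
          (if 0 ≤ p j then halfLine (α j) (∑ i, ((w i).1 j).natAbs) (p j + σ.1 j) else 0) := by
      intro σ
      by_cases hp : ∀ j, 0 ≤ p j
      · simp [hp, ih]
      · rw [if_neg hp]
        push Not at hp
        obtain ⟨j, hj⟩ := hp
        exact (Finset.sum_eq_zero fun w _ =>
          Finset.prod_eq_zero (Finset.mem_univ j) (by rw [if_neg (not_le.2 hj)])).symm
    simp only [h1]
    rw [Finset.sum_comm, Finset.sum_comm (s := (Finset.univ : Finset {σ // σ ∈ S}))]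
    refine Finset.sum_congr rfl fun w _ => ?_
    rw [sum_symmetrize hrefl (fun j x =>
      if 0 ≤ p j then halfLine (α j) (∑ i, ((w i).1 j).natAbs) (p j + x) else 0)]
    refine Finset.sum_congr rfl fun σ _ => Finset.prod_congr rfl fun j _ => ?_
    rw [← halfLine_natAbs _ _ _ _ (hstep σ.1 σ.2 j), Fin.sum_univ_succ]
    simp [Fin.consEquiv]

/-- The normalizing constant of the tilted step law is the inventory at `α⁺`. -/
lemma inventory_eq {d : ℕ} {S : Finset (Fin d → ℤ)} (hstep : IsStepset d S)
    (hrefl : Reflectable d S) (α αplus : Fin d → ℝ) (hαplus : ∀ j, αplus j = max (α j) 1) :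
    inventory d S αplus = ∑ σ : {σ // σ ∈ S}, ∏ j, growth (α j) ^ (σ.1 j).natAbs := by
  rw [inventory, ← Finset.sum_coe_sort S, sum_symmetrize hrefl (fun j x => αplus j ^ x)]
  refine Finset.sum_congr rfl fun σ _ => Finset.prod_congr rfl fun j _ => ?_
  rw [hαplus]
  rcases hstep σ.1 σ.2 j with h | h | h <;> simp [h, growth, add_comm]

/-! ### Limit theory for step counts -/

section StepCounts

variable {ι : Type*} [Fintype ι] {d : ℕ}

/-- Expectation of `f` over `n` independent draws from the weight `W`. -/
noncomputable def expect (W : ι → ℝ) (n : ℕ) (f : (Fin n → ι) → ℝ) : ℝ :=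
  ∑ w : Fin n → ι, (∏ i, W (w i)) * f w

/-- Number of draws that move coordinate `j`, where the draw `x` moves `j` by `a x j`. -/
def moveCount (a : ι → Fin d → ℕ) {n : ℕ} (w : Fin n → ι) (j : Fin d) : ℕ := ∑ i, a (w i) j

lemma expect_mono {W : ι → ℝ} (hW : ∀ x, 0 ≤ W x) {n : ℕ} {f g : (Fin n → ι) → ℝ}
    (h : ∀ w, f w ≤ g w) : expect W n f ≤ expect W n g :=
  Finset.sum_le_sum fun w _ => mul_le_mul_of_nonneg_left (h w) (Finset.prod_nonneg fun _ _ => hW _)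

lemma expect_add (W : ι → ℝ) {n : ℕ} (f g : (Fin n → ι) → ℝ) :
    expect W n (fun w => f w + g w) = expect W n f + expect W n g := by
  simp [expect, mul_add, Finset.sum_add_distrib]

lemma expect_sub (W : ι → ℝ) {n : ℕ} (f g : (Fin n → ι) → ℝ) :
    expect W n (fun w => f w - g w) = expect W n f - expect W n g := by
  simp [expect, mul_sub, Finset.sum_sub_distrib]

lemma expect_const_mul (W : ι → ℝ) {n : ℕ} (c : ℝ) (f : (Fin n → ι) → ℝ) :
    expect W n (fun w => c * f w) = c * expect W n f := by
  simp only [expect, Finset.mul_sum]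
  exact Finset.sum_congr rfl fun w _ => by ring

lemma expect_sum (W : ι → ℝ) {n : ℕ} {κ : Type*} (s : Finset κ) (f : κ → (Fin n → ι) → ℝ) :
    expect W n (fun w => ∑ k ∈ s, f k w) = ∑ k ∈ s, expect W n (f k) := by
  simp only [expect, Finset.mul_sum]
  exact Finset.sum_comm

lemma expect_prod (W : ι → ℝ) (n : ℕ) (φ : ι → ℝ) :
    expect W n (fun w => ∏ i, φ (w i)) = (∑ x, W x * φ x) ^ n := by
  rw [Fintype.sum_pow]
  simp only [expect, Finset.prod_mul_distrib]

lemma expect_const {W : ι → ℝ} (hsum : ∑ x, W x = 1) (n : ℕ) (c : ℝ) :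
    expect W n (fun _ => c) = c := by
  have := expect_prod W n (fun _ => 1)
  simp only [mul_one, hsum, one_pow, Finset.prod_const_one] at this
  have h2 := expect_const_mul W c (fun _ : Fin n → ι => 1)
  rw [this, mul_one] at h2
  simpa using h2

lemma abs_expect_le {W : ι → ℝ} (hW : ∀ x, 0 ≤ W x) {n : ℕ} (f : (Fin n → ι) → ℝ) :
    |expect W n f| ≤ expect W n (fun w => |f w|) := by
  refine (Finset.abs_sum_le_sum_abs _ _).trans (le_of_eq ?_)
  refine Finset.sum_congr rfl fun w _ => ?_
  rw [abs_mul, abs_of_nonneg (Finset.prod_nonneg fun _ _ => hW _)]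

/-- Mean number of moves of coordinate `j` in one draw. -/
noncomputable def moveMean (W : ι → ℝ) (a : ι → Fin d → ℕ) (j : Fin d) : ℝ := ∑ x, W x * a x j

lemma moveMean_le_one {W : ι → ℝ} (hW : ∀ x, 0 ≤ W x) (hsum : ∑ x, W x = 1)
    {a : ι → Fin d → ℕ} (ha : ∀ x j, a x j ≤ 1) (j : Fin d) : moveMean W a j ≤ 1 := by
  rw [← hsum]
  refine Finset.sum_le_sum fun x _ => mul_le_of_le_one_right (hW x) ?_
  exact_mod_cast ha x j

/-- Moment generating function bound for a sum of independent Bernoulli variables. -/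
lemma expect_exp_le {W : ι → ℝ} (hW : ∀ x, 0 ≤ W x) (hsum : ∑ x, W x = 1)
    {a : ι → Fin d → ℕ} (ha : ∀ x j, a x j ≤ 1) (j : Fin d) (n : ℕ) {t : ℝ} (ht : |t| ≤ 1) :
    expect W n (fun w => Real.exp (t * moveCount a w j))
      ≤ Real.exp (n * (moveMean W a j * t + t ^ 2)) := by
  have h1 : ∀ w : Fin n → ι, Real.exp (t * moveCount a w j) = ∏ i, Real.exp (t * a (w i) j) := by
    intro w
    rw [← Real.exp_sum, ← Finset.mul_sum, moveCount]; push_cast; rfl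
  simp only [h1]
  rw [expect_prod W n (fun x => Real.exp (t * a x j)), Real.exp_nat_mul]
  have hp0 : 0 ≤ moveMean W a j := Finset.sum_nonneg fun x _ => mul_nonneg (hW x) (by positivity)
  have h2 : ∑ x, W x * Real.exp (t * a x j) = 1 + moveMean W a j * (Real.exp t - 1) := by
    have : ∀ x, W x * Real.exp (t * a x j) = W x + W x * a x j * (Real.exp t - 1) := by
      intro x
      have := ha x j
      interval_cases h : a x j
      · simp
      · simp; ring
    simp only [this, Finset.sum_add_distrib, hsum, ← Finset.sum_mul, moveMean]
  refine pow_le_pow_left₀ ?_ ?_ n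
  · exact Finset.sum_nonneg fun x _ => mul_nonneg (hW x) (Real.exp_pos _).le
  · rw [h2]
    have h3 := (abs_le.1 (Real.abs_exp_sub_one_sub_id_le ht)).2
    have h4 := Real.add_one_le_exp (moveMean W a j * t + t ^ 2)
    have h5 := moveMean_le_one hW hsum ha j
    nlinarith [sq_nonneg t]

/-- Chernoff bound. -/
lemma expect_deviation {W : ι → ℝ} (hW : ∀ x, 0 ≤ W x) (hsum : ∑ x, W x = 1)
    {a : ι → Fin d → ℕ} (ha : ∀ x j, a x j ≤ 1) (j : Fin d) (n : ℕ) {δ : ℝ} (hδ : 0 < δ)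
    (hδ1 : δ ≤ 1) :
    expect W n (fun w => if δ * n ≤ |moveCount a w j - moveMean W a j * n| then 1 else 0)
      ≤ 2 * Real.exp (-(δ ^ 2 / 4) * n) := by
  set p := moveMean W a j
  -- The exponent `p t + t ^ 2 - t (p ± δ)` is minimal at `t = ± δ / 2`.
  have hb : ∀ t : ℝ, |t| = δ / 2 →
      expect W n (fun w => Real.exp (-(t * p + δ ^ 2 / 2) * n) * Real.exp (t * moveCount a w j))
        ≤ Real.exp (-(δ ^ 2 / 4) * n) := by
    intro t ht
    rw [expect_const_mul]
    refine (mul_le_mul_of_nonneg_left (expect_exp_le hW hsum ha j n (by rw [ht]; linarith))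
      (Real.exp_pos _).le).trans (le_of_eq ?_)
    rw [← Real.exp_add]
    congr 1
    have : t ^ 2 = (δ / 2) ^ 2 := by rw [← ht, sq_abs]
    rw [this]; ring
  have h1 := hb (δ / 2) (abs_of_pos (by positivity))
  have h2 := hb (-(δ / 2)) (by rw [abs_neg, abs_of_pos (by positivity)])
  refine le_trans ?_ ((add_le_add h1 h2).trans (le_of_eq (by ring)))
  rw [← expect_add]
  refine expect_mono hW fun w => ?_
  rw [← Real.exp_add, ← Real.exp_add]
  split_ifs with h
  · rcases le_abs.1 h with h | h
    · refine le_add_of_le_of_nonneg (Real.one_le_exp ?_) (Real.exp_pos _).le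
      nlinarith
    · refine le_add_of_nonneg_of_le (Real.exp_pos _).le (Real.one_le_exp ?_)
      nlinarith
  · positivity

/-- The filter of pairs `(n, N)` with `n → ∞` and `N / n → p`. -/
noncomputable def typicalFilter (p : Fin d → ℝ) : Filter (ℕ × (Fin d → ℕ)) :=
  comap Prod.fst atTop ⊓ comap (fun q => fun j => (q.2 j : ℝ) / q.1) (𝓝 p)

/-- Expectations are determined by typical step counts, for observables of polynomial size. -/
lemma tendsto_expect_zero {W : ι → ℝ} (hW : ∀ x, 0 ≤ W x) (hsum : ∑ x, W x = 1)
    {a : ι → Fin d → ℕ} (ha : ∀ x j, a x j ≤ 1) (X : ℕ → (Fin d → ℕ) → ℝ)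
    (hX : Tendsto (fun q : ℕ × (Fin d → ℕ) => X q.1 q.2) (typicalFilter (moveMean W a)) (𝓝 0))
    (K e : ℝ) (hK : 0 ≤ K) (hbd : ∀ n N, 0 < n → |X n N| ≤ K * (n : ℝ) ^ e) :
    Tendsto (fun n => expect W n (fun w => X n (moveCount a w))) atTop (𝓝 0) := by
  rw [Metric.tendsto_atTop]
  intro ε hε
  have h1 := (Metric.tendsto_nhds.1 hX) (ε / 2) (by positivity)
  simp only [Real.dist_eq, sub_zero] at h1
  have hbasis := (atTop_basis.comap (Prod.fst : ℕ × (Fin d → ℕ) → ℕ)).inf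
    ((Metric.nhds_basis_ball (x := moveMean W a)).comap
      (fun q : ℕ × (Fin d → ℕ) => fun j => (q.2 j : ℝ) / q.1))
  obtain ⟨⟨n₀, δ₀⟩, ⟨-, hδ₀⟩, hsub⟩ := hbasis.eventually_iff.1 h1
  set δ := min δ₀ 1 with hδ
  have hδpos : 0 < δ := lt_min hδ₀ one_pos
  have hlim : Tendsto (fun n : ℕ => 2 * K * d *
      ((n : ℝ) ^ e * Real.exp (-(δ ^ 2 / 4) * n))) atTop (𝓝 (2 * K * d * 0)) :=
    ((tendsto_rpow_mul_exp_neg_mul_atTop_nhds_zero e (δ ^ 2 / 4) (by positivity)).comp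
      tendsto_natCast_atTop_atTop).const_mul _
  rw [mul_zero] at hlim
  obtain ⟨n₁, hn₁⟩ := (Metric.tendsto_atTop.1 hlim) (ε / 2) (by positivity)
  refine ⟨max (max n₀ n₁) 1, fun n hn => ?_⟩
  have hn0 : n₀ ≤ n := by omega
  have hn1 : n₁ ≤ n := by omega
  have hnp : 0 < n := by omega
  have hnp' : (0 : ℝ) < n := by exact_mod_cast hnp
  rw [Real.dist_eq, sub_zero]
  have hpt : ∀ w : Fin n → ι, |X n (moveCount a w)| ≤ ε / 2 + K * (n : ℝ) ^ e *
      ∑ j, (if δ * n ≤ |moveCount a w j - moveMean W a j * n| then (1 : ℝ) else 0) := by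
    intro w
    have hKn : 0 ≤ K * (n : ℝ) ^ e := by positivity
    have hnn : ∀ j, (0 : ℝ) ≤
        (if δ * n ≤ |moveCount a w j - moveMean W a j * n| then (1 : ℝ) else 0) := by
      intro j; split_ifs <;> norm_num
    by_cases hbad : ∃ j, δ * n ≤ |moveCount a w j - moveMean W a j * n|
    · obtain ⟨j, hj⟩ := hbad
      have : (1 : ℝ) ≤
          ∑ j, (if δ * n ≤ |moveCount a w j - moveMean W a j * n| then (1 : ℝ) else 0) := by
        refine le_trans ?_ (Finset.single_le_sum (fun j _ => hnn j) (Finset.mem_univ j))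
        rw [if_pos hj]
      have := mul_le_mul_of_nonneg_left this hKn
      have := hbd n (moveCount a w) hnp
      linarith
    · push Not at hbad
      have hmem : |X n (moveCount a w)| < ε / 2 := by
        refine hsub (x := (n, moveCount a w)) ⟨hn0, ?_⟩
        simp only [Set.mem_preimage, Metric.mem_ball]
        rw [dist_pi_lt_iff hδ₀]
        intro j
        have h3 := (hbad j).trans_le (mul_le_mul_of_nonneg_right (min_le_left δ₀ 1) hnp'.le)
        rw [Real.dist_eq]
        have : (moveCount a w j : ℝ) / n - moveMean W a j
            = (moveCount a w j - moveMean W a j * n) / n := by field_simp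
        rw [this, abs_div, abs_of_pos hnp', div_lt_iff₀ hnp']
        exact h3
      have := mul_nonneg hKn (Finset.sum_nonneg fun j (_ : j ∈ Finset.univ) => hnn j)
      linarith
  have hfin := (abs_expect_le hW _).trans (expect_mono hW hpt)
  rw [expect_add, expect_const hsum, expect_const_mul, expect_sum] at hfin
  have hsumle : ∑ j : Fin d, expect W n (fun w =>
      (if δ * n ≤ |moveCount a w j - moveMean W a j * n| then (1 : ℝ) else 0))
      ≤ d * (2 * Real.exp (-(δ ^ 2 / 4) * n)) := by
    refine (Finset.sum_le_sum fun j _ =>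
      expect_deviation hW hsum ha j n hδpos (min_le_right _ _)).trans (le_of_eq ?_)
    simp
  have h5 := mul_le_mul_of_nonneg_left hsumle (show 0 ≤ K * (n : ℝ) ^ e by positivity)
  have h6 := hn₁ n hn1
  rw [Real.dist_eq, sub_zero] at h6
  have h7 := lt_of_abs_lt h6
  have h8 : K * (n : ℝ) ^ e * (d * (2 * Real.exp (-(δ ^ 2 / 4) * n)))
      = 2 * K * d * ((n : ℝ) ^ e * Real.exp (-(δ ^ 2 / 4) * n)) := by ring
  linarith

/-- Step-count parities form a random walk on `(ℤ/2)^d`; its Fourier coefficients are powers of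
real numbers in `[-1, 1]`, so they converge along each parity class of times. -/
lemma tendsto_expect_parity {W : ι → ℝ} (hW : ∀ x, 0 ≤ W x) (hsum : ∑ x, W x = 1)
    (a : ι → Fin d → ℕ) (u v : Fin d → ℝ) :
    ∃ l₀ l₁ : ℝ,
      Tendsto (fun n => expect W (2 * n)
        (fun w => ∏ j, (u j + v j * (-1) ^ moveCount a w j))) atTop (𝓝 l₀) ∧
      Tendsto (fun n => expect W (2 * n + 1)
        (fun w => ∏ j, (u j + v j * (-1) ^ moveCount a w j))) atTop (𝓝 l₁) := by
  set χ : Finset (Fin d) → ℝ := fun T => ∑ x, W x * ∏ j ∈ T, (-1 : ℝ) ^ a x j with hχ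
  have habs : ∀ T, |χ T| ≤ 1 := by
    intro T
    rw [← hsum]
    refine (Finset.abs_sum_le_sum_abs _ _).trans (Finset.sum_le_sum fun x _ => ?_)
    rw [abs_mul, abs_of_nonneg (hW x), Finset.abs_prod]
    simp
  have hexp : ∀ n, expect W n (fun w => ∏ j, (u j + v j * (-1) ^ moveCount a w j))
      = ∑ T ∈ (Finset.univ : Finset (Fin d)).powerset,
        ((∏ j ∈ Finset.univ \ T, u j) * ∏ j ∈ T, v j) * χ T ^ n := by
    intro n
    have h1 : ∀ w : Fin n → ι, ∏ j, (u j + v j * (-1) ^ moveCount a w j)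
        = ∑ T ∈ (Finset.univ : Finset (Fin d)).powerset,
          ((∏ j ∈ Finset.univ \ T, u j) * ∏ j ∈ T, v j)
            * ∏ i, ∏ j ∈ T, (-1 : ℝ) ^ a (w i) j := by
      intro w
      simp only [add_comm (u _)]
      rw [Finset.prod_add]
      refine Finset.sum_congr rfl fun T _ => ?_
      rw [Finset.prod_mul_distrib, Finset.prod_comm]
      simp only [moveCount, Finset.prod_pow_eq_pow_sum]
      ring
    simp only [h1]
    rw [expect_sum]
    refine Finset.sum_congr rfl fun T _ => ?_
    rw [expect_const_mul, expect_prod W n (fun x => ∏ j ∈ T, (-1 : ℝ) ^ a x j)]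
  have hpow : ∀ T, ∃ l, Tendsto (fun n => (χ T ^ 2) ^ n) atTop (𝓝 l) := by
    intro T
    have h1 : χ T ^ 2 ≤ 1 := by
      rw [← sq_abs]; exact pow_le_one₀ (abs_nonneg _) (habs T)
    rcases h1.eq_or_lt with h | h
    · exact ⟨1, by simp [h]⟩
    · exact ⟨0, tendsto_pow_atTop_nhds_zero_of_lt_one (sq_nonneg _) h⟩
  choose l hl using hpow
  refine ⟨∑ T ∈ (Finset.univ : Finset (Fin d)).powerset,
      ((∏ j ∈ Finset.univ \ T, u j) * ∏ j ∈ T, v j) * l T,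
    ∑ T ∈ (Finset.univ : Finset (Fin d)).powerset,
      ((∏ j ∈ Finset.univ \ T, u j) * ∏ j ∈ T, v j) * (l T * χ T), ?_, ?_⟩
  · simp only [hexp, pow_mul]
    exact tendsto_finsetSum _ fun T _ => (hl T).const_mul _
  · simp only [hexp, pow_succ _ (2 * _), pow_mul]
    exact tendsto_finsetSum _ fun T _ => ((hl T).mul_const _).const_mul _

lemma bounded_of_tendsto_mul_rpow {κ : ℕ → ℝ} {e : ℝ} (he : 0 ≤ e)
    (h : Tendsto (fun N : ℕ => κ N * (N : ℝ) ^ e) atTop (𝓝 1)) : ∃ K, 0 ≤ K ∧ ∀ N, |κ N| ≤ K := by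
  obtain ⟨K, hK⟩ := h.abs.bddAbove_range
  have hK' : ∀ N : ℕ, |κ N * (N : ℝ) ^ e| ≤ K := fun N => hK ⟨N, rfl⟩
  refine ⟨max K |κ 0|, (abs_nonneg _).trans (le_max_right _ _), fun N => ?_⟩
  rcases Nat.eq_zero_or_pos N with rfl | hN
  · exact le_max_right _ _
  · refine le_max_of_le_left (le_trans ?_ (hK' N))
    rw [abs_mul]
    refine le_mul_of_one_le_right (abs_nonneg _) ?_
    rw [abs_of_nonneg (by positivity)]
    exact Real.one_le_rpow (by exact_mod_cast hN) he

/-- If each `κ j N` is asymptotic to `N ^ (-e j)`, then along pairs with `N / n → p` the product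
`∏ j, κ j (N j) * n ^ e j` converges. -/
lemma tendsto_typical {p : Fin d → ℝ} (hp : ∀ j, 0 < p j) {e : Fin d → ℝ}
    {κ : Fin d → ℕ → ℝ}
    (hκ : ∀ j, Tendsto (fun N : ℕ => κ j N * (N : ℝ) ^ e j) atTop (𝓝 1)) :
    Tendsto (fun q : ℕ × (Fin d → ℕ) => ∏ j, (κ j (q.2 j) * (q.1 : ℝ) ^ e j)) (typicalFilter p)
      (𝓝 (∏ j, (p j)⁻¹ ^ e j)) := by
  refine tendsto_finsetProd _ fun j _ => ?_
  have hn : Tendsto (fun q : ℕ × (Fin d → ℕ) => (q.1 : ℝ)) (typicalFilter p) atTop :=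
    tendsto_natCast_atTop_atTop.comp (tendsto_comap.mono_left inf_le_left)
  have hr : Tendsto (fun q : ℕ × (Fin d → ℕ) => (q.2 j : ℝ) / q.1) (typicalFilter p) (𝓝 (p j)) :=
    (tendsto_pi_nhds.1 (tendsto_comap (f := fun q : ℕ × (Fin d → ℕ) =>
      fun j => (q.2 j : ℝ) / q.1) (x := 𝓝 p)) j).mono_left inf_le_right
  have hN : Tendsto (fun q : ℕ × (Fin d → ℕ) => (q.2 j : ℝ)) (typicalFilter p) atTop := by
    refine (hr.pos_mul_atTop (hp j) hn).congr' ?_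
    filter_upwards [hn.eventually_gt_atTop 0] with q hq
    field_simp
  have hN' : Tendsto (fun q : ℕ × (Fin d → ℕ) => q.2 j) (typicalFilter p) atTop :=
    tendsto_natCast_atTop_iff.1 hN
  have h1 := ((hκ j).comp hN').mul
    ((hr.inv₀ (hp j).ne').rpow_const (p := e j) (Or.inl (inv_ne_zero (hp j).ne')))
  rw [one_mul] at h1
  refine h1.congr' ?_
  filter_upwards [hn.eventually_gt_atTop 0, hN.eventually_gt_atTop 0] with q hq hq2
  rw [inv_div, Real.div_rpow hq.le hq2.le]
  have := (Real.rpow_pos_of_pos hq2 (e j)).ne'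
  simp only [Function.comp]
  field_simp

/-- Asymptotics of the mean of a product of functions of the step counts, each of which is regularly
varying up to a parity-dependent constant. -/
lemma expect_asymp {W : ι → ℝ} (hW : ∀ x, 0 ≤ W x) (hsum : ∑ x, W x = 1)
    {a : ι → Fin d → ℕ} (ha : ∀ x j, a x j ≤ 1) (hp : ∀ j, 0 < moveMean W a j)
    (H : Fin d → ℕ → ℝ) (e u v : Fin d → ℝ) (he : ∀ j, 0 ≤ e j)
    (hc : ∀ j (N : ℕ), 0 < u j + v j * (-1) ^ N)
    (hH : ∀ j, Tendsto (fun N : ℕ => H j N / (u j + v j * (-1) ^ N) * (N : ℝ) ^ e j) atTop (𝓝 1)) :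
    ∃ γ₀ γ₁ : ℝ, 0 < γ₀ ∧ 0 < γ₁ ∧
      Tendsto (fun n : ℕ => expect W (2 * n) (fun w => ∏ j, H j (moveCount a w j))
        * ((2 * n : ℕ) : ℝ) ^ (∑ j, e j)) atTop (𝓝 γ₀) ∧
      Tendsto (fun n : ℕ => expect W (2 * n + 1) (fun w => ∏ j, H j (moveCount a w j))
        * ((2 * n + 1 : ℕ) : ℝ) ^ (∑ j, e j)) atTop (𝓝 γ₁) := by
  set p := moveMean W a with hpdef
  set L := ∏ j, (p j)⁻¹ ^ e j with hL
  have hLpos : 0 < L := Finset.prod_pos fun j _ => Real.rpow_pos_of_pos (inv_pos.2 (hp j)) _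
  set c : Fin d → ℕ → ℝ := fun j N => u j + v j * (-1) ^ N with hcdef
  set κ : Fin d → ℕ → ℝ := fun j N => H j N / c j N with hκdef
  obtain ⟨l₀, l₁, hl₀, hl₁⟩ := tendsto_expect_parity hW hsum a u v
  choose K hK0 hK using fun j => bounded_of_tendsto_mul_rpow (he j) (hH j)
  have hcle : ∀ j N, c j N ≤ c j 0 + c j 1 := by
    intro j N
    rcases Nat.even_or_odd N with h | h
    · have : c j N = c j 0 := by simp [hcdef, h.neg_one_pow]
      rw [this]; linarith [hc j 1]
    · have : c j N = c j 1 := by simp [hcdef, h.neg_one_pow]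
      rw [this]; linarith [hc j 0]
  have hcge : ∀ j N, min (c j 0) (c j 1) ≤ c j N := by
    intro j N
    rcases Nat.even_or_odd N with h | h
    · have : c j N = c j 0 := by simp [hcdef, h.neg_one_pow]
      rw [this]; exact min_le_left _ _
    · have : c j N = c j 1 := by simp [hcdef, h.neg_one_pow]
      rw [this]; exact min_le_right _ _
  set C := ∏ j, (c j 0 + c j 1) with hC
  have hCbd : ∀ N : Fin d → ℕ, |∏ j, c j (N j)| ≤ C := by
    intro N
    rw [abs_of_nonneg (Finset.prod_nonneg fun j _ => (hc j _).le)]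
    exact Finset.prod_le_prod (fun j _ => (hc j _).le) fun j _ => hcle j _
  have hC0 : 0 ≤ C := (abs_nonneg _).trans (hCbd 0)
  set X : ℕ → (Fin d → ℕ) → ℝ := fun n N =>
    (∏ j, c j (N j)) * (∏ j, (κ j (N j) * (n : ℝ) ^ e j) - L) with hX
  have hXlim : Tendsto (fun q : ℕ × (Fin d → ℕ) => X q.1 q.2) (typicalFilter p) (𝓝 0) := by
    have h1 := (tendsto_typical hp hH).sub_const L
    rw [← hL, sub_self] at h1
    refine bdd_le_mul_tendsto_zero' C (Eventually.of_forall fun q => hCbd q.2) h1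
  have hXbd : ∀ n N, 0 < n → |X n N| ≤ (C * (∏ j, K j + L)) * (n : ℝ) ^ (∑ j, e j) := by
    intro n N hn
    have hn' : (1 : ℝ) ≤ n := by exact_mod_cast hn
    have hge : (1 : ℝ) ≤ (n : ℝ) ^ (∑ j, e j) :=
      Real.one_le_rpow hn' (Finset.sum_nonneg fun j _ => he j)
    rw [hX, abs_mul, mul_assoc]
    refine mul_le_mul (hCbd N) ?_ (abs_nonneg _) hC0
    rw [Finset.prod_mul_distrib, ← Real.rpow_sum_of_pos (by linarith)]
    refine (abs_sub _ _).trans ?_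
    have h2 : |∏ j, κ j (N j)| ≤ ∏ j, K j := by
      rw [Finset.abs_prod]
      exact Finset.prod_le_prod (fun _ _ => abs_nonneg _) fun j _ => hK j _
    rw [abs_mul, abs_of_pos (show 0 < (n : ℝ) ^ (∑ j, e j) by linarith), abs_of_pos hLpos]
    nlinarith
  have hK' : 0 ≤ C * (∏ j, K j + L) :=
    mul_nonneg hC0 (add_nonneg (Finset.prod_nonneg fun j _ => hK0 j) hLpos.le)
  -- Only the factors `κ` need typical counts; the parity factor `∏ j, c j (N j)` is kept exact.
  have hmain := tendsto_expect_zero hW hsum ha X hXlim _ _ hK' hXbd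
  have hsplit : ∀ n : ℕ, 0 < n → expect W n (fun w => X n (moveCount a w))
      + L * expect W n (fun w => ∏ j, c j (moveCount a w j))
      = expect W n (fun w => ∏ j, H j (moveCount a w j)) * (n : ℝ) ^ (∑ j, e j) := by
    intro n hn
    rw [← expect_const_mul, ← expect_add, mul_comm, ← expect_const_mul]
    congr 1
    ext w
    have h3 : ∏ j, H j (moveCount a w j)
        = (∏ j, c j (moveCount a w j)) * ∏ j, κ j (moveCount a w j) := by
      rw [← Finset.prod_mul_distrib]
      refine Finset.prod_congr rfl fun j _ => ?_
      have : c j (moveCount a w j) ≠ 0 := (hc j _).ne'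
      simp only [hκdef]
      field_simp
    simp only [hX]
    rw [h3, Real.rpow_sum_of_pos (by exact_mod_cast hn), Finset.prod_mul_distrib]
    ring
  have hlow : ∀ n, ∏ j, min (c j 0) (c j 1)
      ≤ expect W n (fun w => ∏ j, c j (moveCount a w j)) := by
    intro n
    rw [← expect_const hsum n (∏ j, min (c j 0) (c j 1))]
    exact expect_mono hW fun w => Finset.prod_le_prod
      (fun j _ => (lt_min (hc j 0) (hc j 1)).le) fun j _ => hcge j _
  have hlowpos : 0 < ∏ j, min (c j 0) (c j 1) :=
    Finset.prod_pos fun j _ => lt_min (hc j 0) (hc j 1)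
  have t0 : Tendsto (fun n : ℕ => 2 * n) atTop atTop :=
    tendsto_atTop_mono (fun n => by simp only [id]; omega) tendsto_id
  have t1 : Tendsto (fun n : ℕ => 2 * n + 1) atTop atTop :=
    tendsto_atTop_mono (fun n => by simp only [id]; omega) tendsto_id
  refine ⟨L * l₀, L * l₁,
    mul_pos hLpos (hlowpos.trans_le (ge_of_tendsto' hl₀ fun n => hlow _)),
    mul_pos hLpos (hlowpos.trans_le (ge_of_tendsto' hl₁ fun n => hlow _)), ?_, ?_⟩
  · have h := (hmain.comp t0).add (hl₀.const_mul L)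
    rw [zero_add] at h
    refine h.congr' ?_
    filter_upwards [eventually_gt_atTop 0] with n hn
    exact hsplit (2 * n) (by omega)
  · have h := (hmain.comp t1).add (hl₁.const_mul L)
    rw [zero_add] at h
    exact h.congr fun n => hsplit (2 * n + 1) (by omega)

end StepCounts

/-! ### Normalization -/

lemma sum_critExp {d : ℕ} (α : Fin d → ℝ) (m r : ℕ)
    (hm : m = (Finset.univ.filter (fun j : Fin d => α j < 1)).card)
    (hr : r = (Finset.univ.filter (fun j : Fin d => α j ≤ 1)).card) :
    ∑ j, critExp (α j) = (r : ℝ) / 2 + m := by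
  subst hm hr
  rw [Finset.card_filter, Finset.card_filter]
  push_cast
  rw [Finset.sum_div, ← Finset.sum_add_distrib]
  refine Finset.sum_congr rfl fun j _ => ?_
  unfold critExp
  rcases lt_trichotomy (α j) 1 with h | h | h
  · simp [h, h.le]; norm_num
  · simp [h]
  · simp [not_lt.2 h.le, not_le.2 h, h.ne']

/-- The law of one step in which every coordinate `j` that moves contributes a factor
`growth (α j)`. -/
noncomputable def stepLaw {d : ℕ} (S : Finset (Fin d → ℤ)) (α : Fin d → ℝ)
    (σ : {σ // σ ∈ S}) : ℝ :=
  (∏ j, growth (α j) ^ (σ.1 j).natAbs) /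
    ∑ τ : {σ // σ ∈ S}, ∏ j, growth (α j) ^ (τ.1 j).natAbs

/-- The normalized count is a mean of a product of functions of the step counts. -/
lemma qcount_eq_expect {d : ℕ} {S : Finset (Fin d → ℤ)} (hstep : IsStepset d S)
    (hrefl : Reflectable d S) (α : Fin d → ℝ) (I : ℝ) (hI0 : I ≠ 0)
    (hI : I = ∑ τ : {σ // σ ∈ S}, ∏ j, growth (α j) ^ (τ.1 j).natAbs) (n : ℕ) :
    qcount d S α n * (I ^ n)⁻¹ = expect (stepLaw S α) n (fun w =>
      ∏ j, halfLine (α j) (moveCount (fun σ j => (σ.1 j).natAbs) w j) 0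
        / growth (α j) ^ moveCount (fun σ j => (σ.1 j).natAbs) w j) := by
  rw [qcount_eq_walkCount, walkCount_eq hstep hrefl, expect, Finset.sum_mul]
  refine Finset.sum_congr rfl fun w _ => ?_
  simp only [stepLaw, ← hI, moveCount]
  rw [Finset.prod_div_distrib, Finset.prod_div_distrib, Finset.prod_comm]
  simp only [Finset.prod_pow_eq_pow_sum, Finset.prod_const, Finset.card_univ, Fintype.card_fin,
    Pi.zero_apply]
  have : ∏ j, growth (α j) ^ ∑ i, ((w i).1 j).natAbs ≠ 0 :=
    (Finset.prod_pos fun j _ => pow_pos (growth_pos _) _).ne'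
  field_simp

/-- Main theorem: asymptotics of weighted reflectable orthant walks. -/
theorem weighted_reflectable_asymptotics
    (d : ℕ) (hd : 1 ≤ d) (S : Finset (Fin d → ℤ))
    (hstep : IsStepset d S) (hrefl : Reflectable d S) (hnt : NontrivialStepset d S)
    (α : Fin d → ℝ) (hα : ∀ j, 0 < α j)
    (αplus : Fin d → ℝ) (hαplus : ∀ j, αplus j = max (α j) 1)
    (m r : ℕ)
    (hm : m = (Finset.univ.filter (fun j : Fin d => α j < 1)).card)
    (hr : r = (Finset.univ.filter (fun j : Fin d => α j ≤ 1)).card) :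
    ∃ γ₀ γ₁ : ℝ, 0 < γ₀ ∧ 0 < γ₁ ∧
      Filter.Tendsto
        (fun n : ℕ => qcount d S α (2 * n) * (inventory d S αplus) ^ (-(2 * n : ℤ))
            * ((2 * n : ℕ) : ℝ) ^ ((r : ℝ) / 2 + (m : ℝ)))
        Filter.atTop (nhds γ₀) ∧
      Filter.Tendsto
        (fun n : ℕ => qcount d S α (2 * n + 1) * (inventory d S αplus) ^ (-((2 * n + 1 : ℕ) : ℤ))
            * ((2 * n + 1 : ℕ) : ℝ) ^ ((r : ℝ) / 2 + (m : ℝ)))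
        Filter.atTop (nhds γ₁) := by
  have hIeq := inventory_eq hstep hrefl α αplus hαplus
  set I := inventory d S αplus
  obtain ⟨σ₀, hσ₀, -⟩ := hnt ⟨0, hd⟩
  have hnum : ∀ σ : {σ // σ ∈ S}, 0 < ∏ j, growth (α j) ^ (σ.1 j).natAbs :=
    fun σ => Finset.prod_pos fun j _ => pow_pos (growth_pos _) _
  have hI : 0 < I := by
    rw [hIeq]
    exact Finset.sum_pos (fun σ _ => hnum σ) ⟨⟨σ₀, hσ₀⟩, Finset.mem_univ _⟩
  have hW : ∀ σ, 0 < stepLaw S α σ := fun σ => by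
    rw [stepLaw, ← hIeq]; exact div_pos (hnum σ) hI
  have hsum : ∑ σ, stepLaw S α σ = 1 := by
    simp only [stepLaw]
    rw [← Finset.sum_div, ← hIeq, div_self hI.ne']
  have ha : ∀ (σ : {σ // σ ∈ S}) (j : Fin d), (σ.1 j).natAbs ≤ 1 := by
    intro σ j
    have := hstep σ.1 σ.2 j
    omega
  have hp : ∀ j, 0 < moveMean (stepLaw S α) (fun σ j => (σ.1 j).natAbs) j := by
    intro j
    obtain ⟨σ, hσ, hj⟩ := hnt j
    refine Finset.sum_pos' (fun τ _ => mul_nonneg (hW τ).le (Nat.cast_nonneg _))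
      ⟨⟨σ, hσ⟩, Finset.mem_univ _, mul_pos (hW _) ?_⟩
    exact_mod_cast Int.natAbs_pos.2 hj
  choose u v hc hH using fun j => halfLine_ratio (hα j)
  obtain ⟨γ₀, γ₁, h0, h1, hl0, hl1⟩ := expect_asymp (fun σ => (hW σ).le) hsum ha hp
    (fun j N => halfLine (α j) N 0 / growth (α j) ^ N) (fun j => critExp (α j)) u v
    (fun j => critExp_nonneg _) hc hH
  simp only [← qcount_eq_expect hstep hrefl α I hI.ne' hIeq, sum_critExp α m r hm hr] at hl0 hl1
  refine ⟨γ₀, γ₁, h0, h1, hl0.congr fun n => ?_, hl1.congr fun n => ?_⟩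
  · rw [zpow_neg, ← zpow_natCast]; push_cast; rfl
  · rw [zpow_neg, ← zpow_natCast]
end

section
/- Let N ⊆ ℝ^r be an open neighbourhood of the origin and let A, φ : ℝ^r → ℂ be smooth functions such that A has compact support contained in N, φ(0) = 0, the gradient of φ vanishes at 0 and at no other point of the support of A, the Hessian matrix H of φ at 0 is nonsingular, and Re φ(θ) ≥ 0 for all θ ∈ N. Then for every integer M ≥ 0 there exist complex constants c_0, c_1, …, c_M with c_0² = (2π)^r·A(0)²/det(H), and a constant K, such that for all n ≥ 1: |∫_N A(θ) e^{−nφ(θ)} dθ − Σ_{j=0}^M c_j n^{−r/2−j}| ≤ K·n^{−r/2−M−1}. -/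
/-!
The proof deforms the phase to `|θ|² / 2` and compares with a Gaussian integral; no Morse lemma and
no diagonalization of the complex Hessian is needed.

* *Integration by parts.* An amplitude vanishing at the origin can be written as the derivative of
  the phase along a compactly supported smooth vector field (`exists_field`). Integrating by parts
  turns it into the divergence of the field at the gain of one power of the large parameter `lam`
  (`osc_field`). Iterating, any amplitude `A` may be replaced by a polynomial in `1 / lam` times a
  fixed bump `ρ` with `ρ = 1` near the origin, up to `O(lam^{-J})` (`osc_reduce`); the constant term
  of the polynomial is `A 0`. The remainder is bounded because `Re φ ≥ 0`.
* *Deformation.* For the path `Φ_t = cos² t · φ + sin² t · |θ|² / 2`, the integral `F(t)` of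
  `ρ exp (-lam Φ_t)` has derivative `-lam ∫ ρ (∂ₜΦ) exp (-lam Φ_t)`, and `∂ₜΦ` vanishes at the
  origin. By the previous step `F' = -(∑ b_j(t) lam^{-j}) F + O(lam^{-J})`, so `F(0)` is
  `exp (∑ P_j lam^{-j}) F(π/2)` up to `O(lam^{-J})`, with `P_j = ∫ b_j` (`osc_deform`). The critical
  point stays nondegenerate along the path since `Re φ ≥ 0` makes the real part of the Hessian
  positive semidefinite (`det_path_ne_zero`), and near the origin there is no other critical point
  (`exists_good`).
* *Leading coefficient.* `b_0(t)` is the divergence of the field at the origin, which equals half of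
  the logarithmic derivative of `det (cos² t · H + sin² t)` (`div_interp`, `hasDerivAt_det_path`).
  Hence `exp (P_0)² = 1 / det H`.
* *Endpoint.* `F(π/2)` is `(2π / lam)^{r/2}` up to an exponentially small error (`osc_gauss`).

Multiplying, the integral is `(2π / lam)^{r/2} g(1 / lam) + O(lam^{-J})` with `g` smooth and
`g(0) = A(0) exp (P_0)`; the expansion is the Taylor expansion of `g` at `0` (`combine`).
-/

open scoped BigOperators Real

/-- Partial derivative in direction `k` of a function on `ℝ^r`. -/
noncomputable def pd {r : ℕ} (k : Fin r) (g : (Fin r → ℝ) → ℂ) : (Fin r → ℝ) → ℂ :=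
  fun θ => deriv (fun s => g (Function.update θ k s)) (θ k)

namespace FourierLaplace

open MeasureTheory Set Filter
open scoped Topology ContDiff Manifold

/-! ### Parametric integrals and the Hadamard lemma -/

section Parametric

theorem hasFDerivAt_param {E F : Type} [NormedAddCommGroup E] [NormedSpace ℝ E]
    [FiniteDimensional ℝ E] [NormedAddCommGroup F] [NormedSpace ℝ F]
    {f : E × ℝ → F} (hf : ContDiff ℝ 1 f) (x₀ : E) :
    HasFDerivAt (fun x => ∫ u in (0 : ℝ)..1, f (x, u))
      (∫ u in (0 : ℝ)..1, (fderiv ℝ f (x₀, u)).comp (ContinuousLinearMap.inl ℝ E ℝ)) x₀ := by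
  have hd : Continuous fun p : E × ℝ =>
      (fderiv ℝ f p).comp (ContinuousLinearMap.inl ℝ E ℝ) :=
    (hf.continuous_fderiv one_ne_zero).clm_comp continuous_const
  obtain ⟨C, hC⟩ := ((isCompact_closedBall x₀ 1).prod
    (isCompact_Icc (a := (0 : ℝ)) (b := 1))).exists_bound_of_continuousOn hd.continuousOn
  refine intervalIntegral.hasFDerivAt_integral_of_dominated_of_fderiv_le
    (F' := fun x u => (fderiv ℝ f (x, u)).comp (ContinuousLinearMap.inl ℝ E ℝ))
    (s := Metric.ball x₀ 1) (bound := fun _ => C)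
    (Metric.ball_mem_nhds x₀ one_pos) ?_ ?_ ?_ ?_ ?_ ?_
  · exact Eventually.of_forall fun x =>
      (hf.continuous.comp (Continuous.prodMk_right x)).aestronglyMeasurable
  · exact (hf.continuous.comp (Continuous.prodMk_right x₀)).intervalIntegrable _ _
  · exact (hd.comp (Continuous.prodMk_right x₀)).aestronglyMeasurable
  · refine Eventually.of_forall fun u hu x hx => hC (x, u) ⟨Metric.ball_subset_closedBall hx, ?_⟩
    rw [uIoc_of_le zero_le_one] at hu
    exact ⟨hu.1.le, hu.2⟩
  · exact intervalIntegrable_const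
  · refine Eventually.of_forall fun u _ x _ => ?_
    have h1 : HasFDerivAt f (fderiv ℝ f (x, u)) (x, u) :=
      (hf.differentiable one_ne_zero (x, u)).hasFDerivAt
    exact h1.comp x (hasFDerivAt_prodMk_left x u)

/-- An integral over `[0, 1]` of a smooth family is smooth in the parameter. -/
theorem contDiff_param {E : Type} [NormedAddCommGroup E] [NormedSpace ℝ E]
    [FiniteDimensional ℝ E] (n : ℕ) : ∀ {F : Type} [NormedAddCommGroup F] [NormedSpace ℝ F]
    {f : E × ℝ → F}, ContDiff ℝ n f → ContDiff ℝ n fun x => ∫ u in (0 : ℝ)..1, f (x, u) := by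
  induction n with
  | zero =>
    intro F _ _ f hf
    rw [Nat.cast_zero, contDiff_zero] at *
    exact intervalIntegral.continuous_parametric_intervalIntegral_of_continuous' (by
      exact hf) 0 1
  | succ n ih =>
    intro F _ _ f hf
    have h1 : ContDiff ℝ 1 f := hf.of_le (by exact_mod_cast Nat.le_add_left 1 n)
    push_cast at hf ⊢
    rw [contDiff_succ_iff_fderiv] at hf ⊢
    refine ⟨fun x => (hasFDerivAt_param h1 x).differentiableAt, by simp, ?_⟩
    have : fderiv ℝ (fun x => ∫ u in (0 : ℝ)..1, f (x, u)) = fun x =>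
        ∫ u in (0 : ℝ)..1, (fderiv ℝ f (x, u)).comp (ContinuousLinearMap.inl ℝ E ℝ) :=
      funext fun x => (hasFDerivAt_param h1 x).fderiv
    rw [this]
    exact ih (f := fun p => (fderiv ℝ f p).comp (ContinuousLinearMap.inl ℝ E ℝ))
      (hf.2.2.clm_comp contDiff_const)

end Parametric

variable {r : ℕ}

/-- Partial derivative in the `k`-th space direction of a function of `(t, θ)`. -/
noncomputable def dd (k : Fin r) (f : ℝ × (Fin r → ℝ) → ℂ) : ℝ × (Fin r → ℝ) → ℂ :=
  fun w => fderiv ℝ f w (0, Pi.single k 1)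

theorem dd_contDiff {f : ℝ × (Fin r → ℝ) → ℂ} (hf : ContDiff ℝ ∞ f) (k : Fin r) :
    ContDiff ℝ ∞ (dd k f) :=
  (hf.fderiv_right (m := ∞) (by simp)).clm_apply contDiff_const

theorem slice_hasFDerivAt {f : ℝ × (Fin r → ℝ) → ℂ} (hf : ContDiff ℝ ∞ f) (t : ℝ)
    (θ : Fin r → ℝ) : HasFDerivAt (fun y => f (t, y))
      ((fderiv ℝ f (t, θ)).comp (ContinuousLinearMap.inr ℝ ℝ (Fin r → ℝ))) θ :=
  ((hf.differentiable (by simp) (t, θ)).hasFDerivAt).comp θ (hasFDerivAt_prodMk_right t θ)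

theorem slice_fderiv {f : ℝ × (Fin r → ℝ) → ℂ} (hf : ContDiff ℝ ∞ f) (t : ℝ)
    (θ : Fin r → ℝ) (k : Fin r) :
    fderiv ℝ (fun y => f (t, y)) θ (Pi.single k 1) = dd k f (t, θ) := by
  rw [(slice_hasFDerivAt hf t θ).fderiv]; simp [dd]

theorem slice_fderiv_apply {f : ℝ × (Fin r → ℝ) → ℂ} (w : ℝ × (Fin r → ℝ)) (v : Fin r → ℝ) :
    fderiv ℝ f w (0, v) = ∑ k, (v k : ℂ) * dd k f w := by
  have : ((0 : ℝ), v) = ∑ k, v k • ((0 : ℝ), (Pi.single k 1 : Fin r → ℝ)) := by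
    ext i
    · simp [Prod.fst_sum]
    · simp [Prod.snd_sum, Finset.sum_apply, Pi.single_apply]
  rw [this, map_sum]
  refine Finset.sum_congr rfl fun k _ => ?_
  rw [map_smul, Complex.real_smul, dd]

/-- Hadamard's lemma: a smooth function vanishing on `θ = 0` is a combination of the coordinates
`θ j` with smooth coefficients, whose values on `θ = 0` are the partial derivatives. -/
theorem hadamard {f : ℝ × (Fin r → ℝ) → ℂ} (hf : ContDiff ℝ ∞ f) (h0 : ∀ t, f (t, 0) = 0) :
    ∃ B : Fin r → ℝ × (Fin r → ℝ) → ℂ, (∀ j, ContDiff ℝ ∞ (B j)) ∧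
      (∀ w, f w = ∑ j, (w.2 j : ℂ) * B j w) ∧ ∀ j t, B j (t, 0) = dd j f (t, 0) := by
  refine ⟨fun j w => ∫ u in (0 : ℝ)..1, dd j f (w.1, u • w.2), fun j => ?_, fun w => ?_, ?_⟩
  · rw [contDiff_infty]
    intro n
    refine contDiff_param n (f := fun p : (ℝ × (Fin r → ℝ)) × ℝ => dd j f (p.1.1, p.2 • p.1.2)) ?_
    refine ((dd_contDiff hf j).of_le (by exact_mod_cast le_top)).comp ?_
    fun_prop
  · obtain ⟨t, θ⟩ := w
    have hder : ∀ u : ℝ, HasDerivAt (fun u : ℝ => f (t, u • θ))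
        (∑ j, (θ j : ℂ) * dd j f (t, u • θ)) u := by
      intro u
      have h1 := (slice_hasFDerivAt hf t (u • θ)).comp_hasDerivAt u
        ((hasDerivAt_id u).smul_const θ)
      rw [one_smul] at h1
      rw [← slice_fderiv_apply]
      exact h1
    have hc : ∀ j, Continuous fun u : ℝ => (θ j : ℂ) * dd j f (t, u • θ) := fun j =>
      continuous_const.mul ((dd_contDiff hf j).continuous.comp (by fun_prop))
    have h2 := intervalIntegral.integral_eq_sub_of_hasDerivAt (a := 0) (b := 1)
      (fun u _ => hder u) ((continuous_finsetSum _ fun j _ => hc j).intervalIntegrable _ _)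
    rw [intervalIntegral.integral_finsetSum fun j _ => (hc j).intervalIntegrable _ _] at h2
    simp only [one_smul, zero_smul, h0, sub_zero] at h2
    rw [← h2]
    simp
  · intro j t
    simp

/-! ### Phases, amplitudes and vector fields -/

/-- The standing hypotheses on a smooth family `Φ (t, ·)` of phases on a compact neighbourhood
`K` of the origin: for every `t`, the only critical point in `K` is a nondegenerate one at `0`,
and the real part is nonnegative on `K`. -/
structure Good (Φ : ℝ × (Fin r → ℝ) → ℂ) (K : Set (Fin r → ℝ)) : Prop where
  smooth : ContDiff ℝ ∞ Φ
  cpt : IsCompact K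
  nhd : K ∈ 𝓝 (0 : Fin r → ℝ)
  grad0 : ∀ t k, dd k Φ (t, 0) = 0
  grad : ∀ t, ∀ θ ∈ K, θ ≠ 0 → ∃ k, dd k Φ (t, θ) ≠ 0
  hess : ∀ t, (Matrix.of fun j k => dd j (dd k Φ) (t, 0)).det ≠ 0
  re : ∀ t, ∀ θ ∈ K, 0 ≤ (Φ (t, θ)).re

/-- Amplitudes: smooth functions of `(t, θ)` that vanish for `θ` outside `K`. -/
structure Amp (K : Set (Fin r → ℝ)) (A : ℝ × (Fin r → ℝ) → ℂ) : Prop where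
  smooth : ContDiff ℝ ∞ A
  supp : ∀ t θ, θ ∉ K → A (t, θ) = 0

theorem contDiff_det {E : Type*} [NormedAddCommGroup E] [NormedSpace ℝ E]
    {M : E → Matrix (Fin r) (Fin r) ℂ} (hM : ∀ i j, ContDiff ℝ ∞ fun w => M w i j) :
    ContDiff ℝ ∞ fun w => (M w).det := by
  simp only [Matrix.det_apply]
  refine ContDiff.sum fun σ _ => ContDiff.const_smul _ (contDiff_prod fun i _ => hM _ _)

theorem contDiff_adjugate {E : Type*} [NormedAddCommGroup E] [NormedSpace ℝ E]
    {M : E → Matrix (Fin r) (Fin r) ℂ} (hM : ∀ i j, ContDiff ℝ ∞ fun w => M w i j) (i j : Fin r) :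
    ContDiff ℝ ∞ fun w => (M w).adjugate i j := by
  simp only [Matrix.adjugate_apply]
  refine contDiff_det fun a b => ?_
  simp only [Matrix.updateRow_apply]
  split_ifs
  · exact contDiff_const
  · exact hM a b

/-- An amplitude vanishing on `θ = 0` is the derivative of the phase along a smooth vector field
supported in `K`. Near `θ = 0` the field comes from Hadamard's lemma and the invertibility of the
Hessian, elsewhere it points in a coordinate
direction along which the phase has nonzero derivative; the condition on the value of the
field at each point is convex, so a partition of unity glues the local choices. -/
theorem exists_field {Φ A : ℝ × (Fin r → ℝ) → ℂ} {K : Set (Fin r → ℝ)} (hΦ : Good Φ K)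
    (hA : Amp K A) (hA0 : ∀ t, A (t, 0) = 0) :
    ∃ X : Fin r → ℝ × (Fin r → ℝ) → ℂ, (∀ k, Amp K (X k)) ∧
      ∀ w, ∑ k, X k w * dd k Φ w = A w := by
  obtain ⟨α, hα, hAα, -⟩ := hadamard hA.smooth hA0
  choose m hm hGm hm0 using fun k => hadamard (dd_contDiff hΦ.smooth k) (hΦ.grad0 · k)
  let M : ℝ × (Fin r → ℝ) → Matrix (Fin r) (Fin r) ℂ := fun w => Matrix.of fun k j => m k j w
  have hM : ∀ i j, ContDiff ℝ ∞ fun w => M w i j := fun i j => hm i j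
  let S : ℝ × (Fin r → ℝ) → Set (Fin r → ℂ) := fun w =>
    {v | ∑ k, v k * dd k Φ w = A w ∧ (w.2 ∉ K → v = 0)}
  have hconv : ∀ w, Convex ℝ (S w) := by
    rintro w v ⟨hv, hv'⟩ u ⟨hu, hu'⟩ a b ha hb hab
    refine ⟨?_, fun h => by simp [hv' h, hu' h]⟩
    have : ∑ k, (a • v + b • u) k * dd k Φ w
        = a * ∑ k, v k * dd k Φ w + b * ∑ k, u k * dd k Φ w := by
      simp only [Pi.add_apply, Pi.smul_apply, Complex.real_smul, add_mul, Finset.sum_add_distrib,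
        Finset.mul_sum, mul_assoc]
    rw [this, hu, hv, ← add_mul, ← Complex.ofReal_add, hab]; simp
  have hloc : ∀ w : ℝ × (Fin r → ℝ), ∃ U ∈ 𝓝 w, ∃ g : ℝ × (Fin r → ℝ) → (Fin r → ℂ),
      ContMDiffOn 𝓘(ℝ, ℝ × (Fin r → ℝ)) 𝓘(ℝ, Fin r → ℂ) ∞ g U ∧ ∀ y ∈ U, g y ∈ S y := by
    rintro ⟨t, θ⟩
    by_cases hθK : θ ∈ K
    swap
    · refine ⟨Prod.snd ⁻¹' Kᶜ, (hΦ.cpt.isClosed.isOpen_compl.preimage continuous_snd).mem_nhds hθK,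
        fun _ => 0, contMDiffOn_const, ?_⟩
      rintro ⟨t', y⟩ hy
      refine ⟨?_, fun _ => rfl⟩
      simp [hA.supp t' y hy]
    by_cases hθ : θ = 0
    · subst hθ
      have hdet : (M (t, 0)).det ≠ 0 := by
        have : M (t, 0) = (Matrix.of fun j k => dd j (dd k Φ) (t, 0)).transpose := by
          ext i j; simp [M, hm0]
        rw [this, Matrix.det_transpose]; exact hΦ.hess t
      have hdc := contDiff_det hM
      have ho : IsOpen {w | (M w).det ≠ 0} := isOpen_ne_fun hdc.continuous continuous_const
      refine ⟨{w | (M w).det ≠ 0} ∩ Prod.snd ⁻¹' K, inter_mem (ho.mem_nhds hdet)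
        (continuous_snd.continuousAt.preimage_mem_nhds hΦ.nhd),
        -- `Φ' = M θ` and `A = α · θ`, so `X = α M⁻¹` gives `X · Φ' = A`
        fun w => (M w).det⁻¹ • Matrix.vecMul (fun j => α j w) (M w).adjugate, ?_, ?_⟩
      · rw [contMDiffOn_iff_contDiffOn]
        refine contDiffOn_pi.2 fun k => ?_
        simp only [Pi.smul_apply, Matrix.vecMul, dotProduct, smul_eq_mul]
        refine ContDiffOn.mul (hdc.contDiffOn.inv fun w hw => hw.1) ?_
        exact (ContDiff.sum fun j _ => (hα j).mul (contDiff_adjugate hM j k)).contDiffOn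
      · rintro w ⟨hw, hwK⟩
        refine ⟨?_, fun h => absurd hwK h⟩
        have hG : (fun k => dd k Φ w) = Matrix.mulVec (M w) fun j => (w.2 j : ℂ) := by
          ext k; simp [hGm k w, Matrix.mulVec, dotProduct, M, mul_comm]
        change dotProduct _ (fun k => dd k Φ w) = _
        rw [hG, smul_dotProduct, ← Matrix.dotProduct_mulVec, Matrix.mulVec_mulVec,
          Matrix.adjugate_mul, Matrix.smul_mulVec, Matrix.one_mulVec, dotProduct_smul, smul_smul,
          inv_mul_cancel₀ hw, one_smul, hAα w]
        simp [dotProduct, mul_comm]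
    · obtain ⟨k₀, hk₀⟩ := hΦ.grad t θ hθK hθ
      have hc := dd_contDiff hΦ.smooth k₀
      refine ⟨{w | dd k₀ Φ w ≠ 0}, (isOpen_ne_fun hc.continuous continuous_const).mem_nhds hk₀,
        fun w => Pi.single k₀ (A w * (dd k₀ Φ w)⁻¹), ?_, ?_⟩
      · rw [contMDiffOn_iff_contDiffOn]
        refine contDiffOn_pi.2 fun k => ?_
        by_cases hk : k = k₀
        · subst hk
          simp only [Pi.single_eq_same]
          exact hA.smooth.contDiffOn.mul (hc.contDiffOn.inv fun w hw => hw)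
        · simp only [Pi.single_eq_of_ne hk]
          exact contDiffOn_const
      · rintro ⟨t', y⟩ hw
        refine ⟨?_, fun h => by simp [hA.supp t' y h]⟩
        simp only [Pi.single_apply, ite_mul, zero_mul, Finset.sum_ite_eq', Finset.mem_univ, if_true]
        rw [mul_assoc, inv_mul_cancel₀ hw, mul_one]
  obtain ⟨g, hg⟩ := exists_contMDiffMap_forall_mem_convex_of_local
    𝓘(ℝ, ℝ × (Fin r → ℝ)) (n := (⊤ : ℕ∞)) hconv hloc
  have hgs := contDiff_pi.1 (contMDiff_iff_contDiff.1 g.contMDiff)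
  refine ⟨fun k w => g w k, fun k => ⟨hgs k, fun t θ h => ?_⟩, fun w => (hg w).1⟩
  simp [(hg (t, θ)).2 h]

/-! ### Oscillatory integrals and integration by parts -/

/-- The integral `∫ A (t, θ) exp (-lam * Φ (t, θ)) dθ`. -/
noncomputable def osc (Φ : ℝ × (Fin r → ℝ) → ℂ) (lam t : ℝ) (A : ℝ × (Fin r → ℝ) → ℂ) : ℂ :=
  ∫ θ : Fin r → ℝ, A (t, θ) * Complex.exp (-(lam : ℂ) * Φ (t, θ))

theorem dd_eq_zero_off {f : ℝ × (Fin r → ℝ) → ℂ} {K : Set (Fin r → ℝ)} (hK : IsClosed K)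
    (hf : ∀ t θ, θ ∉ K → f (t, θ) = 0) {t : ℝ} {θ : Fin r → ℝ} (h : θ ∉ K) :
    fderiv ℝ f (t, θ) = 0 := by
  have : f =ᶠ[𝓝 (t, θ)] fun _ => 0 := by
    filter_upwards [(hK.isOpen_compl.preimage continuous_snd).mem_nhds
      (show (t, θ) ∈ Prod.snd ⁻¹' Kᶜ from h)] with w hw
    exact hf w.1 w.2 hw
  rw [this.fderiv_eq]; simp

theorem Amp.dd {f : ℝ × (Fin r → ℝ) → ℂ} {K : Set (Fin r → ℝ)} (hK : IsClosed K) (hf : Amp K f)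
    (k : Fin r) : Amp K (dd k f) :=
  ⟨dd_contDiff hf.smooth k, fun t θ h => by simp [FourierLaplace.dd, dd_eq_zero_off hK hf.supp h]⟩

theorem Amp.sum {K : Set (Fin r → ℝ)} {ι : Type*} {s : Finset ι}
    {f : ι → ℝ × (Fin r → ℝ) → ℂ} (hf : ∀ i ∈ s, Amp K (f i)) : Amp K fun w => ∑ i ∈ s, f i w :=
  ⟨ContDiff.sum fun i hi => (hf i hi).smooth,
    fun t θ h => Finset.sum_eq_zero fun i hi => (hf i hi).supp t θ h⟩

theorem Amp.mul {K : Set (Fin r → ℝ)} {f g : ℝ × (Fin r → ℝ) → ℂ} (hf : Amp K f)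
    (hg : ContDiff ℝ ∞ g) : Amp K fun w => f w * g w :=
  ⟨hf.smooth.mul hg, fun t θ h => by simp [hf.supp t θ h]⟩

theorem Amp.sub {K : Set (Fin r → ℝ)} {f g : ℝ × (Fin r → ℝ) → ℂ} (hf : Amp K f)
    (hg : Amp K g) : Amp K fun w => f w - g w :=
  ⟨hf.smooth.sub hg.smooth, fun t θ h => by simp [hf.supp t θ h, hg.supp t θ h]⟩

theorem contDiff_phase {Φ : ℝ × (Fin r → ℝ) → ℂ} (hΦ : ContDiff ℝ ∞ Φ) (lam : ℝ) :
    ContDiff ℝ ∞ fun w => Complex.exp (-(lam : ℂ) * Φ w) :=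
  (contDiff_const.mul hΦ).cexp

theorem Amp.integrable {K : Set (Fin r → ℝ)} {f : ℝ × (Fin r → ℝ) → ℂ} (hK : IsCompact K)
    (hf : Amp K f) (t : ℝ) : Integrable fun θ => f (t, θ) :=
  (hf.smooth.continuous.comp (Continuous.prodMk_right t)).integrable_of_hasCompactSupport
    (HasCompactSupport.intro hK fun θ h => hf.supp t θ h)

theorem dd_mul {f g : ℝ × (Fin r → ℝ) → ℂ} (hf : ContDiff ℝ ∞ f) (hg : ContDiff ℝ ∞ g)
    (k : Fin r) (w : ℝ × (Fin r → ℝ)) : dd k (fun w => f w * g w) w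
      = dd k f w * g w + f w * dd k g w := by
  rw [dd, fderiv_fun_mul (hf.differentiable (by simp) w) (hg.differentiable (by simp) w)]
  simp [dd]; ring

theorem dd_sum {ι : Type*} {s : Finset ι} {f : ι → ℝ × (Fin r → ℝ) → ℂ}
    (hf : ∀ i ∈ s, ContDiff ℝ ∞ (f i)) (k : Fin r) (w : ℝ × (Fin r → ℝ)) :
    dd k (fun w => ∑ i ∈ s, f i w) w = ∑ i ∈ s, dd k (f i) w := by
  rw [dd, fderiv_fun_sum fun i hi => (hf i hi).differentiable (by simp) w]
  simp [dd]

theorem dd_phase {Φ : ℝ × (Fin r → ℝ) → ℂ} (hΦ : ContDiff ℝ ∞ Φ) (lam : ℝ) (k : Fin r)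
    (w : ℝ × (Fin r → ℝ)) : dd k (fun w => Complex.exp (-(lam : ℂ) * Φ w)) w
      = -(lam : ℂ) * dd k Φ w * Complex.exp (-(lam : ℂ) * Φ w) := by
  have := ((hΦ.differentiable (by simp) w).hasFDerivAt.const_mul (-(lam : ℂ))).cexp.fderiv
  rw [dd, this]
  simp [dd]; ring

/-- Integration by parts: the divergence theorem for `exp (-lam * Φ) X`. -/
theorem osc_field {Φ : ℝ × (Fin r → ℝ) → ℂ} {K : Set (Fin r → ℝ)} (hK : IsCompact K)
    (hΦ : ContDiff ℝ ∞ Φ) {X : Fin r → ℝ × (Fin r → ℝ) → ℂ} (hX : ∀ k, Amp K (X k))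
    (lam t : ℝ) :
    (lam : ℂ) * osc Φ lam t (fun w => ∑ k, X k w * dd k Φ w)
      = osc Φ lam t fun w => ∑ k, dd k (X k) w := by
  have hE := contDiff_phase hΦ lam
  have key : ∀ k, ∫ θ : Fin r → ℝ, X k (t, θ) *
        dd k (fun w => Complex.exp (-(lam : ℂ) * Φ w)) (t, θ)
      = - ∫ θ : Fin r → ℝ, dd k (X k) (t, θ) * Complex.exp (-(lam : ℂ) * Φ (t, θ)) := by
    intro k
    have := integral_mul_fderiv_eq_neg_fderiv_mul_of_integrable (μ := volume) (𝕜 := ℂ)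
      (f := fun θ : Fin r → ℝ => X k (t, θ))
      (g := fun θ => Complex.exp (-(lam : ℂ) * Φ (t, θ))) (v := Pi.single k 1)
      (by
        simp only [slice_fderiv (hX k).smooth]
        exact (((hX k).dd hK.isClosed k).mul hE).integrable hK t)
      (by
        simp only [slice_fderiv hE]
        exact ((hX k).mul (dd_contDiff hE k)).integrable hK t)
      (((hX k).mul hE).integrable hK t)
      (fun θ _ => (slice_hasFDerivAt (hX k).smooth t θ).differentiableAt)
      (fun θ _ => (slice_hasFDerivAt hE t θ).differentiableAt)
    simpa only [slice_fderiv (hX k).smooth, slice_fderiv hE] using this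
  have h2 : osc Φ lam t (fun w => ∑ k, dd k (X k) w) = ∑ k, ∫ θ : Fin r → ℝ,
      dd k (X k) (t, θ) * Complex.exp (-(lam : ℂ) * Φ (t, θ)) := by
    rw [osc, ← integral_finsetSum]
    · simp only [Finset.sum_mul]
    · exact fun k _ => (((hX k).dd hK.isClosed k).mul hE).integrable hK t
  have h3 : ∀ k, ∫ θ : Fin r → ℝ, dd k (X k) (t, θ) * Complex.exp (-(lam : ℂ) * Φ (t, θ))
      = ∫ θ : Fin r → ℝ, (lam : ℂ) * (X k (t, θ) * dd k Φ (t, θ) *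
        Complex.exp (-(lam : ℂ) * Φ (t, θ))) := by
    intro k
    rw [← neg_eq_iff_eq_neg.2 (key k), ← integral_neg]
    congr 1; ext θ
    rw [dd_phase hΦ]; ring
  rw [h2, Finset.sum_congr rfl fun k _ => h3 k, ← integral_finsetSum, osc, ← integral_const_mul]
  · simp only [Finset.sum_mul, Finset.mul_sum]
  · exact fun k _ => ((((hX k).mul (dd_contDiff hΦ k)).mul hE).integrable hK t).const_mul _

theorem osc_sub {Φ A B : ℝ × (Fin r → ℝ) → ℂ} {K : Set (Fin r → ℝ)} (hK : IsCompact K)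
    (hΦ : ContDiff ℝ ∞ Φ) (hA : Amp K A) (hB : Amp K B) (lam t : ℝ) :
    osc Φ lam t (fun w => A w - B w) = osc Φ lam t A - osc Φ lam t B := by
  have hE := contDiff_phase hΦ lam
  rw [osc, osc, osc, ← integral_sub ((hA.mul hE).integrable hK t) ((hB.mul hE).integrable hK t)]
  simp only [sub_mul]

/-- Repeated integration by parts reduces any amplitude to a fixed amplitude `ρ` equal to `1` at the
origin, up to an arbitrarily high power of `lam⁻¹`. -/
theorem osc_reduce {Φ ρ : ℝ × (Fin r → ℝ) → ℂ} {K : Set (Fin r → ℝ)} (hΦ : Good Φ K)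
    (hρ : Amp K ρ) (hρ0 : ∀ t, ρ (t, 0) = 1) (J : ℕ) :
    ∀ A, Amp K A → ∃ (a : ℕ → ℝ → ℂ) (R : ℝ × (Fin r → ℝ) → ℂ), (∀ j, Continuous (a j)) ∧
      (∀ t, a 0 t = A (t, 0)) ∧ Amp K R ∧ ∀ lam t : ℝ, 0 < lam → osc Φ lam t A =
        (∑ j ∈ Finset.range J, a j t * ((lam : ℂ)⁻¹) ^ j) * osc Φ lam t ρ
          + ((lam : ℂ)⁻¹) ^ J * osc Φ lam t R := by
  induction J with
  | zero =>
    intro A hA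
    exact ⟨fun _ t => A (t, 0), A, fun _ => hA.smooth.continuous.comp (by fun_prop),
      fun t => rfl, hA, by simp⟩
  | succ J ih =>
    intro A hA
    have hA0s : ContDiff ℝ ∞ fun w : ℝ × (Fin r → ℝ) => A (w.1, 0) :=
      hA.smooth.comp (by fun_prop)
    have hρA := hρ.mul hA0s
    have hB := hA.sub hρA
    -- `A - A(t, 0) ρ` vanishes at the origin, so one integration by parts gains a power of `lam`
    obtain ⟨X, hX, hXA⟩ := exists_field hΦ hB fun t => by simp [hρ0]
    have hD : Amp K fun w => ∑ k, dd k (X k) w :=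
      Amp.sum fun k _ => (hX k).dd hΦ.cpt.isClosed k
    obtain ⟨a, R, ha, -, hR, h⟩ := ih _ hD
    refine ⟨fun j => Nat.casesOn j (fun t => A (t, 0)) a, R, ?_, fun t => rfl, hR, ?_⟩
    · rintro (_ | j)
      · exact hA.smooth.continuous.comp (by fun_prop)
      · exact ha j
    · intro lam t hl
      have hl' : (lam : ℂ) ≠ 0 := by exact_mod_cast hl.ne'
      have h1 := osc_field hΦ.cpt hΦ.smooth hX lam t
      simp only [hXA] at h1
      rw [osc_sub hΦ.cpt hΦ.smooth hA hρA, h lam t hl] at h1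
      have h2 : osc Φ lam t (fun w => ρ w * A (w.1, 0)) = A (t, 0) * osc Φ lam t ρ := by
        rw [osc, osc, ← integral_const_mul]
        congr 1; ext θ; ring
      rw [h2] at h1
      have h3 : osc Φ lam t A = A (t, 0) * osc Φ lam t ρ + (lam : ℂ)⁻¹ *
          ((∑ j ∈ Finset.range J, a j t * ((lam : ℂ)⁻¹) ^ j) * osc Φ lam t ρ
          + ((lam : ℂ)⁻¹) ^ J * osc Φ lam t R) := by
        rw [← h1]; field_simp; ring
      rw [h3, Finset.sum_range_succ']
      simp only [pow_succ, pow_zero, ← mul_assoc, ← Finset.sum_mul]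
      change _ = (_ + A (t, 0) * 1) * _ + _
      ring

/-- On compact ranges of `t`, the integrals are bounded uniformly in `lam ≥ 0`. -/
theorem osc_bound {Φ A : ℝ × (Fin r → ℝ) → ℂ} {K : Set (Fin r → ℝ)} (hΦ : Good Φ K)
    (hA : Amp K A) (T : ℝ) : ∃ C, 0 ≤ C ∧ ∀ lam t : ℝ, 0 ≤ lam → t ∈ Icc 0 T →
      ‖osc Φ lam t A‖ ≤ C := by
  obtain ⟨C, hC⟩ := ((isCompact_Icc (a := (0 : ℝ)) (b := T)).prod
    hΦ.cpt).exists_bound_of_continuousOn hA.smooth.continuous.continuousOn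
  refine ⟨|C| * volume.real K, by positivity, fun lam t hl ht => ?_⟩
  rw [osc, ← setIntegral_eq_integral_of_forall_compl_eq_zero (s := K)
    fun θ h => by rw [hA.supp t θ h, zero_mul]]
  refine norm_setIntegral_le_of_norm_le_const hΦ.cpt.measure_lt_top fun θ hθ => ?_
  rw [norm_mul, Complex.norm_exp]
  have h1 : Real.exp (-(lam : ℂ) * Φ (t, θ)).re ≤ 1 := by
    rw [Real.exp_le_one_iff, ← Complex.ofReal_neg, Complex.re_ofReal_mul]
    have := mul_nonneg hl (hΦ.re t θ hθ)
    linarith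
  calc _ ≤ |C| * 1 := by
        gcongr
        exact (hC (t, θ) ⟨ht, hθ⟩).trans (le_abs_self C)
    _ = |C| := mul_one _

/-! ### Dependence on the parameter -/

/-- Partial derivative in the parameter `t` of a function of `(t, θ)`. -/
noncomputable def dt (f : ℝ × (Fin r → ℝ) → ℂ) : ℝ × (Fin r → ℝ) → ℂ :=
  fun w => fderiv ℝ f w (1, 0)

theorem dt_contDiff {f : ℝ × (Fin r → ℝ) → ℂ} (hf : ContDiff ℝ ∞ f) : ContDiff ℝ ∞ (dt f) :=
  (hf.fderiv_right (m := ∞) (by simp)).clm_apply contDiff_const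

theorem hasDerivAt_dt {f : ℝ × (Fin r → ℝ) → ℂ} (hf : ContDiff ℝ ∞ f) (t : ℝ) (θ : Fin r → ℝ) :
    HasDerivAt (fun s => f (s, θ)) (dt f (t, θ)) t := by
  have h := ((hf.differentiable (by simp) (t, θ)).hasFDerivAt).comp_hasDerivAt t
    ((hasDerivAt_id t).prodMk (hasDerivAt_const t θ))
  exact h

theorem Amp.hasDerivAt_integral {f : ℝ × (Fin r → ℝ) → ℂ} {K : Set (Fin r → ℝ)}
    (hK : IsCompact K) (hf : Amp K f) (t : ℝ) :
    HasDerivAt (fun s => ∫ θ, f (s, θ)) (∫ θ, dt f (t, θ)) t := by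
  have hdt : Amp K (dt f) := ⟨dt_contDiff hf.smooth,
    fun t θ h => by simp [dt, dd_eq_zero_off hK.isClosed hf.supp h]⟩
  obtain ⟨C, hC⟩ := ((isCompact_closedBall t 1).prod
    hK).exists_bound_of_continuousOn hdt.smooth.continuous.continuousOn
  refine (hasDerivAt_integral_of_dominated_loc_of_deriv_le (F := fun s θ => f (s, θ))
    (F' := fun s θ => dt f (s, θ)) (bound := K.indicator fun _ => C)
    (Metric.ball_mem_nhds t one_pos)
    (Eventually.of_forall fun s => (hf.integrable hK s).aestronglyMeasurable)
    (hf.integrable hK t) (hdt.integrable hK t).aestronglyMeasurable ?_ ?_ ?_).2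
  · refine Eventually.of_forall fun θ s hs => ?_
    by_cases h : θ ∈ K
    · rw [indicator_of_mem h]
      exact hC (s, θ) ⟨Metric.ball_subset_closedBall hs, h⟩
    · rw [indicator_of_notMem h, hdt.supp s θ h, norm_zero]
  · exact (integrable_indicator_iff hK.measurableSet).2
      (integrableOn_const hK.measure_lt_top.ne)
  · exact Eventually.of_forall fun θ s _ => hasDerivAt_dt hf.smooth s θ

theorem osc_hasDerivAt {Φ ρ : ℝ × (Fin r → ℝ) → ℂ} {K : Set (Fin r → ℝ)} (hK : IsCompact K)
    (hΦ : ContDiff ℝ ∞ Φ) (hρ : Amp K ρ) (hρt : ∀ t θ, ρ (t, θ) = ρ (0, θ)) (lam t : ℝ) :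
    HasDerivAt (fun s => osc Φ lam s ρ)
      (-(lam : ℂ) * osc Φ lam t fun w => ρ w * dt Φ w) t := by
  have hE := contDiff_phase hΦ lam
  have h0 := (hρ.mul hE).hasDerivAt_integral hK t
  suffices h : -(lam : ℂ) * osc Φ lam t (fun w => ρ w * dt Φ w) =
      ∫ θ, dt (fun w => ρ w * Complex.exp (-(lam : ℂ) * Φ w)) (t, θ) by
    rw [h]; exact h0
  rw [osc, ← integral_const_mul]
  congr 1; ext θ
  have h1 := hasDerivAt_dt (hρ.smooth.mul hE) t θ
  have h2 : HasDerivAt (fun s => ρ (s, θ) * Complex.exp (-(lam : ℂ) * Φ (s, θ)))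
      (ρ (t, θ) * (Complex.exp (-(lam : ℂ) * Φ (t, θ)) * (-(lam : ℂ) * dt Φ (t, θ)))) t := by
    have := ((hasDerivAt_dt hΦ t θ).const_mul (-(lam : ℂ))).cexp.const_mul (ρ (0, θ))
    simp only [hρt _ θ]
    exact this
  rw [h1.unique h2]; ring

/-! ### The divergence at the critical point -/

/-- If the field `X` realizes an amplitude `A` vanishing to second order at `θ = 0`, then its
divergence there is half the trace of `H⁻¹` times the Hessian of `A`, where `H` is the Hessian of
the phase. -/
theorem div_at_zero {Φ A : ℝ × (Fin r → ℝ) → ℂ} {X : Fin r → ℝ × (Fin r → ℝ) → ℂ} {t : ℝ}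
    (hΦ : ContDiff ℝ ∞ Φ) (hΦ0 : ∀ k, dd k Φ (t, 0) = 0) (hX : ∀ k, ContDiff ℝ ∞ (X k))
    (hXA : ∀ w, ∑ k, X k w * dd k Φ w = A w) {H B : Matrix (Fin r) (Fin r) ℂ}
    (hH : ∀ j k, H j k = dd j (dd k Φ) (t, 0)) (hsymm : H.transpose = H) (hdet : H.det ≠ 0)
    (hA1 : ∀ j, dd j A (t, 0) = 0) (hB : ∀ i j, B i j = dd i (dd j A) (t, 0)) :
    2 * ∑ k, dd k (X k) (t, 0) = (H⁻¹ * B).trace := by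
  have hG := fun k => dd_contDiff hΦ k
  have h1 : ∀ j, dd j A = fun w => ∑ k, (dd j (X k) w * dd k Φ w + X k w * dd j (dd k Φ) w) := by
    intro j
    ext w
    rw [← funext hXA, dd_sum fun k _ => (hX k).mul (hG k)]
    exact Finset.sum_congr rfl fun k _ => dd_mul (hX k) (hG k) j w
  -- the first-order vanishing of `A` forces the field itself to vanish at the origin
  have hX0 : (fun k => X k (t, 0)) = 0 := by
    refine Matrix.eq_zero_of_mulVec_eq_zero hdet ?_
    ext j
    have := hA1 j
    rw [h1] at this
    simpa [hΦ0, Matrix.mulVec, dotProduct, hH, mul_comm] using this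
  have hX0' : ∀ k, X k (t, 0) = 0 := fun k => congrFun hX0 k
  let J : Matrix (Fin r) (Fin r) ℂ := Matrix.of fun i k => dd i (X k) (t, 0)
  have hBJ : B = H * J.transpose + J * H := by
    ext i j
    have ha : ∀ k, ContDiff ℝ ∞ fun w => dd j (X k) w * dd k Φ w := fun k =>
      (dd_contDiff (hX k) j).mul (hG k)
    have hb : ∀ k, ContDiff ℝ ∞ fun w => X k w * dd j (dd k Φ) w := fun k =>
      (hX k).mul (dd_contDiff (hG k) j)
    have hadd : ∀ k w, dd i (fun w => dd j (X k) w * dd k Φ w + X k w * dd j (dd k Φ) w) w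
        = dd i (fun w => dd j (X k) w * dd k Φ w) w + dd i (fun w => X k w * dd j (dd k Φ) w) w := by
      intro k w
      simp only [dd]
      exact congrArg (fun L : (ℝ × (Fin r → ℝ)) →L[ℝ] ℂ => L (0, Pi.single i 1))
        (fderiv_fun_add ((ha k).differentiable (by simp) w) ((hb k).differentiable (by simp) w))
    rw [hB, h1, dd_sum fun k _ => (ha k).add (hb k)]
    simp only [hadd, dd_mul (dd_contDiff (hX _) j) (hG _), dd_mul (hX _) (dd_contDiff (hG _) j),
      hΦ0, hX0', mul_zero, zero_mul, zero_add, add_zero]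
    rw [Matrix.add_apply, Matrix.mul_apply, Matrix.mul_apply, Finset.sum_add_distrib]
    congr 1
    · exact Finset.sum_congr rfl fun k _ => by simp [J, hH, mul_comm]
    · refine Finset.sum_congr rfl fun k _ => ?_
      have : H k j = H j k := congrFun (congrFun hsymm j) k
      rw [this]; simp [J, hH]
  have hu : IsUnit H.det := isUnit_iff_ne_zero.2 hdet
  rw [hBJ, mul_add, Matrix.trace_add, ← mul_assoc, Matrix.nonsing_inv_mul _ hu, one_mul,
    ← mul_assoc, Matrix.trace_mul_comm, ← mul_assoc, Matrix.mul_nonsing_inv _ hu, one_mul,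
    Matrix.trace_transpose, two_mul]
  rfl

/-! ### The interpolating family of phases -/

/-- Partial derivative of a function of `θ`. -/
noncomputable def pk (k : Fin r) (f : (Fin r → ℝ) → ℂ) : (Fin r → ℝ) → ℂ :=
  fun θ => fderiv ℝ f θ (Pi.single k 1)

theorem pk_contDiff {f : (Fin r → ℝ) → ℂ} (hf : ContDiff ℝ ∞ f) (k : Fin r) :
    ContDiff ℝ ∞ (pk k f) :=
  (hf.fderiv_right (m := ∞) (by simp)).clm_apply contDiff_const

theorem pd_eq_pk {f : (Fin r → ℝ) → ℂ} (hf : ContDiff ℝ ∞ f) (k : Fin r) : pd k f = pk k f := by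
  ext θ
  have h1 : HasFDerivAt f (fderiv ℝ f θ) (Function.update θ k (θ k)) := by
    rw [Function.update_eq_self]
    exact (hf.differentiable (by simp) θ).hasFDerivAt
  exact (h1.comp_hasDerivAt (θ k) (hasDerivAt_update θ k (θ k))).deriv

theorem pk_symm {f : (Fin r → ℝ) → ℂ} (hf : ContDiff ℝ ∞ f) (j k : Fin r) (θ : Fin r → ℝ) :
    pk j (pk k f) θ = pk k (pk j f) θ := by
  have hs : IsSymmSndFDerivAt ℝ f θ := hf.contDiffAt.isSymmSndFDerivAt (by
    rw [minSmoothness_of_isRCLikeNormedField]; exact WithTop.coe_le_coe.2 (le_top : (2 : ℕ∞) ≤ ⊤))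
  have hd : DifferentiableAt ℝ (fderiv ℝ f) θ :=
    (hf.fderiv_right (m := ∞) (by simp)).differentiable (by simp) θ
  have h : ∀ i l, pk i (pk l f) θ = fderiv ℝ (fderiv ℝ f) θ (Pi.single i 1) (Pi.single l 1) := by
    intro i l
    have := (hd.hasFDerivAt.clm_apply (hasFDerivAt_const (Pi.single l (1 : ℝ)) θ)).fderiv
    change fderiv ℝ (fun y => fderiv ℝ f y (Pi.single l 1)) θ (Pi.single i 1) = _
    rw [this]
    simp
  rw [h, h]
  exact hs _ _

/-- The standard real quadratic phase `|θ|² / 2`. -/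
noncomputable def quad (θ : Fin r → ℝ) : ℂ := ((∑ k, θ k ^ 2 / 2 : ℝ) : ℂ)

theorem quad_contDiff : ContDiff ℝ ∞ (quad (r := r)) := by
  have h : ContDiff ℝ ∞ fun θ : Fin r → ℝ => ∑ k, θ k ^ 2 / 2 :=
    ContDiff.sum fun k _ => by fun_prop
  exact Complex.ofRealCLM.contDiff.comp h

/-- The coordinate `θ ↦ θ k` as a continuous linear map to `ℂ`. -/
noncomputable def coordL (k : Fin r) : (Fin r → ℝ) →L[ℝ] ℂ :=
  Complex.ofRealCLM.comp (ContinuousLinearMap.proj (R := ℝ) (φ := fun _ : Fin r => ℝ) k)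

theorem coord_contDiff (k : Fin r) : ContDiff ℝ ∞ fun θ : Fin r → ℝ => (θ k : ℂ) :=
  (coordL k).contDiff

theorem pk_coord (j k : Fin r) (θ : Fin r → ℝ) :
    pk j (fun θ => (θ k : ℂ)) θ = if j = k then 1 else 0 := by
  have h : HasFDerivAt (fun θ : Fin r → ℝ => (θ k : ℂ))
      (coordL k) θ := (coordL k).hasFDerivAt
  rw [pk, h.fderiv, coordL]
  by_cases hjk : j = k
  · subst hjk; simp
  · simp [hjk]

theorem pk_quad (k : Fin r) : pk k (quad (r := r)) = fun θ => (θ k : ℂ) := by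
  ext θ
  have h : HasFDerivAt (fun θ : Fin r → ℝ => ∑ k, θ k ^ 2 / 2)
      (∑ k, (θ k) • ContinuousLinearMap.proj (R := ℝ) (φ := fun _ : Fin r => ℝ) k) θ := by
    refine HasFDerivAt.fun_sum fun i _ => ?_
    have h1 : HasFDerivAt (fun θ : Fin r → ℝ => θ i)
      (ContinuousLinearMap.proj (R := ℝ) (φ := fun _ : Fin r => ℝ) i) θ :=
        (ContinuousLinearMap.proj (R := ℝ) (φ := fun _ : Fin r => ℝ) i).hasFDerivAt
    have h2 : HasDerivAt (fun x : ℝ => x ^ 2 / 2) (θ i) (θ i) := by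
      have := ((hasDerivAt_id (θ i)).pow 2).div_const 2
      simpa using this
    exact h2.comp_hasFDerivAt θ h1
  have h2 := (Complex.ofRealCLM.hasFDerivAt.comp θ h).fderiv
  change fderiv ℝ (Complex.ofRealCLM ∘ fun θ : Fin r → ℝ => ∑ k, θ k ^ 2 / 2) θ (Pi.single k 1) = _
  rw [h2]
  simp [Pi.single_apply]

theorem sep_contDiff {c : ℝ → ℂ} {f : (Fin r → ℝ) → ℂ} (hc : ContDiff ℝ ∞ c)
    (hf : ContDiff ℝ ∞ f) : ContDiff ℝ ∞ fun w : ℝ × (Fin r → ℝ) => c w.1 * f w.2 :=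
  (hc.comp contDiff_fst).mul (hf.comp contDiff_snd)

theorem dd_sep {c : ℝ → ℂ} {f : (Fin r → ℝ) → ℂ} (hc : ContDiff ℝ ∞ c) (hf : ContDiff ℝ ∞ f)
    (k : Fin r) : dd k (fun w => c w.1 * f w.2) = fun w => c w.1 * pk k f w.2 := by
  ext ⟨t, θ⟩
  have hcf : ContDiff ℝ ∞ fun w : ℝ × (Fin r → ℝ) => c w.1 * f w.2 :=
    sep_contDiff hc hf
  rw [← slice_fderiv hcf]
  simp only
  rw [fderiv_const_mul (hf.differentiable (by simp) θ)]
  simp [pk]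

theorem dt_sep {c c' : ℝ → ℂ} {f : (Fin r → ℝ) → ℂ} (hc : ContDiff ℝ ∞ c) (hf : ContDiff ℝ ∞ f)
    (hc' : ∀ t, HasDerivAt c (c' t) t) :
    dt (fun w => c w.1 * f w.2) = fun w => c' w.1 * f w.2 := by
  ext ⟨t, θ⟩
  have hcf : ContDiff ℝ ∞ fun w : ℝ × (Fin r → ℝ) => c w.1 * f w.2 :=
    sep_contDiff hc hf
  exact (hasDerivAt_dt hcf t θ).unique ((hc' t).mul_const (f θ))

theorem dd_add {f g : ℝ × (Fin r → ℝ) → ℂ} (hf : ContDiff ℝ ∞ f) (hg : ContDiff ℝ ∞ g)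
    (k : Fin r) : dd k (fun w => f w + g w) = fun w => dd k f w + dd k g w := by
  ext w
  simp only [dd]
  exact congrArg (fun L : (ℝ × (Fin r → ℝ)) →L[ℝ] ℂ => L (0, Pi.single k 1))
    (fderiv_fun_add (hf.differentiable (by simp) w) (hg.differentiable (by simp) w))

theorem dt_add {f g : ℝ × (Fin r → ℝ) → ℂ} (hf : ContDiff ℝ ∞ f) (hg : ContDiff ℝ ∞ g) :
    dt (fun w => f w + g w) = fun w => dt f w + dt g w := by
  ext w
  simp only [dt]
  exact congrArg (fun L : (ℝ × (Fin r → ℝ)) →L[ℝ] ℂ => L (1, 0))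
    (fderiv_fun_add (hf.differentiable (by simp) w) (hg.differentiable (by simp) w))

/-- The weight `cos² t` as a complex number. -/
noncomputable def cc (t : ℝ) : ℂ := ((Real.cos t ^ 2 : ℝ) : ℂ)

/-- The weight `sin² t` as a complex number. -/
noncomputable def ss (t : ℝ) : ℂ := ((Real.sin t ^ 2 : ℝ) : ℂ)

/-- The derivative `2 sin t cos t` of `sin² t`. -/
noncomputable def sc (t : ℝ) : ℂ := ((2 * Real.sin t * Real.cos t : ℝ) : ℂ)

theorem cc_contDiff : ContDiff ℝ ∞ cc :=
  Complex.ofRealCLM.contDiff.comp (Real.contDiff_cos.pow 2)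

theorem ss_contDiff : ContDiff ℝ ∞ ss :=
  Complex.ofRealCLM.contDiff.comp (Real.contDiff_sin.pow 2)

theorem hasDerivAt_ss (t : ℝ) : HasDerivAt ss (sc t) t := by
  have := ((Real.hasDerivAt_sin t).pow 2).ofReal_comp
  have h : sc t = ((((2 : ℕ) : ℝ) * Real.sin t ^ (2 - 1) * Real.cos t : ℝ) : ℂ) := by
    simp [sc]
  rw [h]
  exact this

theorem hasDerivAt_cc (t : ℝ) : HasDerivAt cc (-sc t) t := by
  have := ((Real.hasDerivAt_cos t).pow 2).ofReal_comp
  have h : -sc t = ((((2 : ℕ) : ℝ) * Real.cos t ^ (2 - 1) * -Real.sin t : ℝ) : ℂ) := by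
    simp [sc]; ring
  rw [h]
  exact this

/-- The path `cos² t · φ + sin² t · |θ|²/2` from the phase `φ` to the standard quadratic phase. The
trigonometric weights make the family smooth for all real `t`. -/
noncomputable def interp (φ : (Fin r → ℝ) → ℂ) : ℝ × (Fin r → ℝ) → ℂ :=
  fun w => cc w.1 * φ w.2 + ss w.1 * quad w.2


theorem interp_contDiff {φ : (Fin r → ℝ) → ℂ} (hφ : ContDiff ℝ ∞ φ) :
    ContDiff ℝ ∞ (interp φ) :=
  (sep_contDiff cc_contDiff hφ).add
    (sep_contDiff ss_contDiff quad_contDiff)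

theorem dd_interp {φ : (Fin r → ℝ) → ℂ} (hφ : ContDiff ℝ ∞ φ) (k : Fin r) :
    dd k (interp φ) =
    fun w => cc w.1 * pk k φ w.2 + ss w.1 * (w.2 k : ℂ) := by
  unfold interp
  rw [dd_add (sep_contDiff cc_contDiff hφ)
    (sep_contDiff ss_contDiff quad_contDiff),
    dd_sep cc_contDiff hφ, dd_sep ss_contDiff quad_contDiff, pk_quad]

theorem dd_dd_interp {φ : (Fin r → ℝ) → ℂ} (hφ : ContDiff ℝ ∞ φ)
    (j k : Fin r) (w : ℝ × (Fin r → ℝ)) : dd j (dd k (interp φ)) w =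
    cc w.1 * pk j (pk k φ) w.2 + ss w.1 * if j = k then 1 else 0 := by
  have hc := coord_contDiff k
  rw [dd_interp hφ, dd_add (sep_contDiff cc_contDiff (pk_contDiff hφ k))
    (sep_contDiff ss_contDiff hc),
    dd_sep cc_contDiff (pk_contDiff hφ k), dd_sep ss_contDiff hc]
  simp only [pk_coord]

theorem dt_interp {φ : (Fin r → ℝ) → ℂ} (hφ : ContDiff ℝ ∞ φ) :
    dt (interp φ) = fun w => -sc w.1 * φ w.2 + sc w.1 * quad w.2 := by
  unfold interp
  rw [dt_add (sep_contDiff cc_contDiff hφ)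
    (sep_contDiff ss_contDiff quad_contDiff),
    dt_sep cc_contDiff hφ hasDerivAt_cc, dt_sep ss_contDiff quad_contDiff hasDerivAt_ss]

/-! ### Nondegeneracy along the path and choice of the neighbourhood -/

theorem fderiv_apply_eq_sum (g : (Fin r → ℝ) → ℂ) (θ v : Fin r → ℝ) :
    fderiv ℝ g θ v = ∑ k, (v k : ℂ) * pk k g θ := by
  have e : v = ∑ k, v k • Pi.single k (1 : ℝ) := by
    ext j; simp [Pi.single_apply]
  conv_lhs => rw [e, map_sum]
  exact Finset.sum_congr rfl fun k _ => by simp [pk]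

theorem hasDerivAt_ray {g : (Fin r → ℝ) → ℂ} (hg : ContDiff ℝ ∞ g) (v : Fin r → ℝ) (ε : ℝ) :
    HasDerivAt (fun s : ℝ => g (s • v)) (∑ k, (v k : ℂ) * pk k g (ε • v)) ε := by
  have h1 : HasDerivAt (fun s : ℝ => s • v) v ε := by
    simpa using (hasDerivAt_id ε).smul_const v
  have h2 := ((hg.differentiable (by simp) (ε • v)).hasFDerivAt).comp_hasDerivAt ε h1
  rw [fderiv_apply_eq_sum] at h2
  exact h2

/-- At a zero that is a critical point and a local minimum of the real part, the real part of the
Hessian is positive semidefinite. -/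
theorem re_hess_nonneg {φ : (Fin r → ℝ) → ℂ} (hφ : ContDiff ℝ ∞ φ) (hφ0 : φ 0 = 0)
    (hg : ∀ k, pk k φ 0 = 0) (hre : ∀ᶠ θ in 𝓝 (0 : Fin r → ℝ), 0 ≤ (φ θ).re) (v : Fin r → ℝ) :
    0 ≤ (∑ k, (v k : ℂ) * ∑ j, (v j : ℂ) * pk j (pk k φ) 0).re := by
  by_contra! hneg
  have hre' : ∀ ε : ℝ, HasDerivAt (fun s : ℝ => (φ (s • v)).re)
      (∑ k, (v k : ℂ) * pk k φ (ε • v)).re ε := fun ε =>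
    Complex.reCLM.hasFDerivAt.comp_hasDerivAt ε (hasDerivAt_ray hφ v ε)
  have hd : deriv (fun s : ℝ => (φ (s • v)).re) =
      fun ε => (∑ k, (v k : ℂ) * pk k φ (ε • v)).re := funext fun ε => (hre' ε).deriv
  have hdd : HasDerivAt (deriv (fun s : ℝ => (φ (s • v)).re))
      (∑ k, (v k : ℂ) * ∑ j, (v j : ℂ) * pk j (pk k φ) 0).re 0 := by
    rw [hd]
    have := HasDerivAt.fun_sum (u := Finset.univ) fun k _ =>
      (hasDerivAt_ray (pk_contDiff hφ k) v 0).const_mul (v k : ℂ)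
    have := Complex.reCLM.hasFDerivAt.comp_hasDerivAt 0 this
    simp only [zero_smul] at this
    exact this
  -- a negative second derivative would make `0` a strict local maximum of a nonnegative function
  have hmax := isLocalMax_of_deriv_deriv_neg (f := fun s : ℝ => (φ (s • v)).re) (x₀ := 0)
    (by rw [hdd.deriv]; exact hneg) (by rw [hd]; simp [hg]) (hre' 0).continuousAt
  have hev : ∀ᶠ s : ℝ in 𝓝 0, 0 ≤ (φ (s • v)).re := by
    have : Tendsto (fun s : ℝ => s • v) (𝓝 0) (𝓝 0) := by
      have : Continuous fun s : ℝ => s • v := by fun_prop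
      simpa using this.tendsto 0
    exact this.eventually hre
  have hz : (fun s : ℝ => (φ (s • v)).re) =ᶠ[𝓝 0] fun _ => 0 := by
    filter_upwards [hev, hmax] with s h1 h2
    simp only [zero_smul, hφ0, Complex.zero_re] at h2
    exact le_antisymm h2 h1
  have h2 := hz.deriv.deriv_eq
  rw [hdd.deriv] at h2
  simp at h2
  simp [h2] at hneg

/-- If the real part of a nonsingular complex symmetric matrix is positive semidefinite, then all
convex combinations with the identity are nonsingular. -/
theorem det_path_ne_zero {H : Matrix (Fin r) (Fin r) ℂ} (hs : ∀ i j, H i j = H j i)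
    (hdet : H.det ≠ 0)
    (hpos : ∀ v : Fin r → ℝ, 0 ≤ (∑ k, (v k : ℂ) * ∑ j, (v j : ℂ) * H j k).re)
    {s : ℝ} (h0 : 0 ≤ s) (h1 : s ≤ 1) :
    (((1 - s : ℝ) : ℂ) • H + (s : ℂ) • (1 : Matrix (Fin r) (Fin r) ℂ)).det ≠ 0 := by
  rcases h0.eq_or_lt with rfl | h0
  · simpa using hdet
  intro h
  obtain ⟨v, hv, hMv⟩ := Matrix.exists_mulVec_eq_zero_iff.2 h
  have hre : ∀ a : Fin r → ℝ, (∑ k, (a k : ℂ) * ∑ j, (a j : ℂ) * H j k).re =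
      ∑ k, ∑ j, a k * a j * (H k j).re := fun a => by
    rw [Complex.re_sum]
    refine Finset.sum_congr rfl fun k _ => ?_
    rw [Finset.mul_sum, Complex.re_sum]
    refine Finset.sum_congr rfl fun j _ => ?_
    rw [← mul_assoc, ← Complex.ofReal_mul, Complex.re_ofReal_mul, hs]
  -- by symmetry of `H`, `Re (v* H v)` splits into the forms at the real and imaginary parts of `v`
  have key : (∑ k, star (v k) * ∑ j, H k j * v j).re =
      (∑ k, ((v k).re : ℂ) * ∑ j, ((v j).re : ℂ) * H j k).re +
      (∑ k, ((v k).im : ℂ) * ∑ j, ((v j).im : ℂ) * H j k).re := by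
    have e : ∀ k j, (star (v k) * (H k j * v j)).re =
      ((v k).re * (v j).re * (H k j).re + (v k).im * (v j).im * (H k j).re) +
      ((v k).im * (v j).re * (H k j).im - (v j).im * (v k).re * (H k j).im) := fun k j => by
      simp [Complex.mul_re, Complex.mul_im]; ring
    have anti : ∑ k, ∑ j, (v k).im * (v j).re * (H k j).im =
        ∑ k, ∑ j, (v j).im * (v k).re * (H k j).im := by
      rw [Finset.sum_comm]
      refine Finset.sum_congr rfl fun k _ => Finset.sum_congr rfl fun j _ => ?_
      rw [hs]
    rw [hre, hre, Complex.re_sum]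
    simp only [Finset.mul_sum, Complex.re_sum, e, Finset.sum_add_distrib, Finset.sum_sub_distrib]
    rw [anti]; ring
  have hz : ∑ k, star (v k) * (((1 - s : ℝ) : ℂ) * (∑ j, H k j * v j) + s * v k) = 0 := by
    refine Finset.sum_eq_zero fun k _ => ?_
    have := congrFun hMv k
    rw [Matrix.add_mulVec, Matrix.smul_mulVec, Matrix.smul_mulVec, Matrix.one_mulVec] at this
    simp only [Pi.add_apply, Pi.smul_apply, smul_eq_mul, Matrix.mulVec, dotProduct,
      Pi.zero_apply] at this
    rw [this, mul_zero]
  have hz2 : (1 - s) * (∑ k, star (v k) * ∑ j, H k j * v j).re + s * ∑ k, ‖v k‖ ^ 2 = 0 := by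
    have := congrArg Complex.re hz
    simp only [mul_add, Finset.sum_add_distrib, Complex.add_re, Complex.zero_re] at this
    rw [← this]
    congr 1
    · rw [← Complex.re_ofReal_mul, Finset.mul_sum]
      congr 1
      exact Finset.sum_congr rfl fun k _ => by ring
    · rw [Complex.re_sum, Finset.mul_sum]
      refine Finset.sum_congr rfl fun k _ => ?_
      rw [mul_left_comm, Complex.re_ofReal_mul]
      congr 1
      rw [← Complex.normSq_eq_norm_sq, Complex.normSq_apply]
      simp
  have hp : 0 ≤ (∑ k, star (v k) * ∑ j, H k j * v j).re := by
    rw [key]; exact add_nonneg (hpos _) (hpos _)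
  have hs0 : ∑ k, ‖v k‖ ^ 2 = 0 := by
    have a1 : 0 ≤ ∑ k, ‖v k‖ ^ 2 := Finset.sum_nonneg fun _ _ => by positivity
    have a2 := mul_nonneg (sub_nonneg.2 h1) hp
    nlinarith
  refine hv (funext fun k => ?_)
  have := (Finset.sum_eq_zero_iff_of_nonneg fun _ _ => by positivity).1 hs0 k (Finset.mem_univ k)
  simpa using this

theorem cc_eq (t : ℝ) : cc t = ((1 - Real.sin t ^ 2 : ℝ) : ℂ) := by
  rw [cc, Real.cos_sq']

theorem dd_snd {f : (Fin r → ℝ) → ℂ} (hf : ContDiff ℝ ∞ f) (k : Fin r) :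
    dd k (fun w : ℝ × (Fin r → ℝ) => f w.2) = fun w => pk k f w.2 := by
  have := dd_sep (c := fun _ => 1) contDiff_const hf k
  simpa using this

theorem fderiv_eq_zero_of_pk {f : (Fin r → ℝ) → ℂ} {θ : Fin r → ℝ} (h : ∀ k, pk k f θ = 0) :
    fderiv ℝ f θ = 0 := by
  ext v
  simp [fderiv_apply_eq_sum, h]

/-- A small closed ball works for the whole path: compactness of the range `[0, 1]` of `sin²` makes
the radius on which the gradients of `interp φ (t, ·)` vanish only at the origin uniform in `t`. -/
theorem exists_good {φ : (Fin r → ℝ) → ℂ} (hφ : ContDiff ℝ ∞ φ)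
    {N : Set (Fin r → ℝ)} (hN : N ∈ 𝓝 0) (hφ0 : φ 0 = 0) (hg : ∀ k, pk k φ 0 = 0)
    (hre : ∀ θ ∈ N, 0 ≤ (φ θ).re)
    (hdet : (Matrix.of fun j k => pk j (pk k φ) 0).det ≠ 0) :
    ∃ ε > 0, Good (interp φ) (Metric.closedBall 0 ε) ∧ Metric.closedBall 0 ε ⊆ N := by
  set H : Matrix (Fin r) (Fin r) ℂ := Matrix.of fun j k => pk j (pk k φ) 0 with hH
  have hpos := fun v => re_hess_nonneg hφ hφ0 hg (mem_of_superset hN hre) v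
  have hnz : ∀ s : ℝ, 0 ≤ s → s ≤ 1 →
      (((1 - s : ℝ) : ℂ) • H + (s : ℂ) • (1 : Matrix (Fin r) (Fin r) ℂ)).det ≠ 0 :=
    fun s h0 h1 => det_path_ne_zero (fun i j => pk_symm hφ i j 0) hdet (fun v => hpos v) h0 h1
  choose m hm hGm hm0 using fun k => hadamard
    (f := fun w : ℝ × (Fin r → ℝ) => pk k φ w.2) ((pk_contDiff hφ k).comp contDiff_snd)
    fun _ => hg k
  let D : ℝ × (Fin r → ℝ) → ℂ := fun w =>
    (((1 - w.1 : ℝ) : ℂ) • (Matrix.of fun j k => m k j (0, w.2)) +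
      (w.1 : ℂ) • (1 : Matrix (Fin r) (Fin r) ℂ)).det
  have hD : Continuous D := by
    refine Continuous.matrix_det ?_
    have h1 : Continuous fun w : ℝ × (Fin r → ℝ) => ((1 - w.1 : ℝ) : ℂ) := by fun_prop
    have h2 : Continuous fun w : ℝ × (Fin r → ℝ) => (w.1 : ℂ) := by fun_prop
    refine (h1.smul ?_).add (h2.smul continuous_const)
    refine continuous_matrix fun j k => ?_
    exact (hm k j).continuous.comp (by fun_prop)
  obtain ⟨u, v, -, hv, hu1, hv0, huv⟩ := generalized_tube_lemma (s := Icc (0 : ℝ) 1)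
    (t := {(0 : Fin r → ℝ)}) isCompact_Icc isCompact_singleton
    (n := {w | D w ≠ 0}) (isOpen_ne_fun hD continuous_const) (by
      rintro ⟨s, θ⟩ ⟨hs, hθ⟩
      obtain rfl : θ = 0 := hθ
      have e : (Matrix.of fun j k => m k j (0, (0 : Fin r → ℝ))) = H := by
        ext j k
        simp only [Matrix.of_apply, hm0, hH]
        rw [dd_snd (pk_contDiff hφ k)]
      simp only [mem_ofPred_eq, D, e]
      exact hnz s hs.1 hs.2)
  have hvN : v ∩ N ∈ 𝓝 (0 : Fin r → ℝ) := inter_mem (hv.mem_nhds (hv0 rfl)) hN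
  obtain ⟨ε, hε, hball⟩ := Metric.nhds_basis_closedBall.mem_iff.1 hvN
  refine ⟨ε, hε, ?_, fun x hx => (hball hx).2⟩
  have hsin : ∀ t, Real.sin t ^ 2 ∈ Icc (0 : ℝ) 1 := fun t => ⟨sq_nonneg _, Real.sin_sq_le_one t⟩
  refine ⟨interp_contDiff hφ, isCompact_closedBall 0 ε, Metric.closedBall_mem_nhds 0 hε, ?_, ?_, ?_,
    ?_⟩
  · intro t k
    simp [dd_interp hφ, hg]
  · intro t θ hθ hθ0
    by_contra! hcon
    have hd : D (Real.sin t ^ 2, θ) ≠ 0 :=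
      huv (mk_mem_prod (hu1 (hsin t)) (hball hθ).1)
    -- the gradient at `θ` is the product of `θ` with the matrix whose determinant is `D`
    refine hd (Matrix.exists_vecMul_eq_zero_iff.1 ⟨fun j => (θ j : ℂ), ?_, ?_⟩)
    · intro h
      exact hθ0 (funext fun j => by simpa using congrFun h j)
    · ext k
      have h1 := hcon k
      have h2 := hGm k (0, θ)
      simp only at h2
      rw [dd_interp hφ] at h1
      simp only [h2, cc_eq, ss] at h1
      rw [Matrix.vecMul_add, Matrix.vecMul_smul, Matrix.vecMul_smul, Matrix.vecMul_one]
      simpa [Matrix.vecMul, dotProduct] using h1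
  · intro t
    convert hnz _ (hsin t).1 (hsin t).2 using 2
    ext j k
    simp [dd_dd_interp hφ, cc_eq, ss, hH, Matrix.one_apply]
  · intro t θ hθ
    simp only [interp, cc, ss, quad]
    rw [Complex.add_re, Complex.re_ofReal_mul, Complex.re_ofReal_mul, Complex.ofReal_re]
    have := hre θ (hball hθ).2
    positivity

theorem exists_bump {ε : ℝ} (hε : 0 < ε) : ∃ χ : (Fin r → ℝ) → ℝ, ContDiff ℝ ∞ χ ∧
    (∀ θ ∉ Metric.closedBall 0 ε, χ θ = 0) ∧ (∃ δ > 0, ∀ θ ∈ Metric.closedBall 0 δ, χ θ = 1) ∧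
    ∀ θ, 0 ≤ χ θ ∧ χ θ ≤ 1 := by
  let b : ContDiffBump (0 : Fin r → ℝ) := ⟨ε / 2, ε, by positivity, by linarith⟩
  refine ⟨b, b.contDiff, fun θ hθ => ?_, ⟨ε / 2, by positivity, fun θ hθ => ?_⟩,
    fun θ => ⟨b.nonneg, b.le_one⟩⟩
  · refine b.zero_of_le_dist ?_
    simp only [Metric.mem_closedBall, not_le] at hθ
    exact hθ.le
  · exact b.one_of_mem_closedBall hθ

/-! ### Deformation to the quadratic phase -/

theorem hasDerivAt_det_line {M : Matrix (Fin r) (Fin r) ℂ} (hM : M.det ≠ 0)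
    (B : Matrix (Fin r) (Fin r) ℂ) :
    HasDerivAt (fun h : ℂ => (M + h • B).det) (M.det * (M⁻¹ * B).trace) 0 := by
  have hu : IsUnit M.det := isUnit_iff_ne_zero.2 hM
  have e : (fun h : ℂ => (M + h • B).det) = fun h : ℂ => M.det * (1 + (M⁻¹ * B).trace * h +
      (1 + (Polynomial.X : Polynomial ℂ) • (M⁻¹ * B).map Polynomial.C).det.divX.divX.eval h *
        h ^ 2) := by
    ext h
    rw [← Matrix.det_one_add_smul, ← Matrix.det_mul]
    congr 1
    rw [mul_add, mul_one, mul_smul_comm, Matrix.mul_nonsing_inv_cancel_left _ _ hu]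
  rw [e]
  set p := (1 + (Polynomial.X : Polynomial ℂ) • (M⁻¹ * B).map Polynomial.C).det.divX.divX
  have h1 := ((hasDerivAt_id (0 : ℂ)).const_mul (M⁻¹ * B).trace).const_add 1
  have h2 := (p.hasDerivAt 0).mul ((hasDerivAt_id (0 : ℂ)).pow 2)
  have h3 := (h1.add h2).const_mul M.det
  refine h3.congr_deriv ?_
  simp

/-- Jacobi's formula along the path `cos² t · H + sin² t`. -/
theorem hasDerivAt_det_path (H : Matrix (Fin r) (Fin r) ℂ) (t : ℝ)
    (hM : (cc t • H + ss t • (1 : Matrix (Fin r) (Fin r) ℂ)).det ≠ 0) :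
    HasDerivAt (fun s : ℝ => (cc s • H + ss s • (1 : Matrix (Fin r) (Fin r) ℂ)).det)
      ((cc t • H + ss t • (1 : Matrix (Fin r) (Fin r) ℂ)).det *
        ((cc t • H + ss t • (1 : Matrix (Fin r) (Fin r) ℂ))⁻¹ * (sc t • (1 - H))).trace) t := by
  have h1 : HasDerivAt (fun s => ss s - ss t) (sc t) t := (hasDerivAt_ss t).sub_const _
  have h2 := hasDerivAt_det_line hM (1 - H)
  rw [← sub_self (ss t)] at h2
  have h3 := h2.comp t h1
  have e : ∀ s, cc s • H + ss s • (1 : Matrix (Fin r) (Fin r) ℂ) =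
      cc t • H + ss t • (1 : Matrix (Fin r) (Fin r) ℂ) + (ss s - ss t) • (1 - H) := fun s => by
    simp only [cc_eq, ss, Complex.ofReal_sub, Complex.ofReal_one]
    module
  have h4 := h3.congr_of_eventuallyEq (Eventually.of_forall fun s => congrArg Matrix.det (e s))
  refine h4.congr_deriv ?_
  rw [mul_smul_comm, Matrix.trace_smul, smul_eq_mul]; ring

/-- If the field `X` realizes the amplitude `ρ · ∂ₜΦ` for the path `Φ = interp φ`, then its divergence
at the origin is half the logarithmic derivative of the Hessian determinant along the path. -/
theorem div_interp {φ : (Fin r → ℝ) → ℂ} {K : Set (Fin r → ℝ)} (hφ : ContDiff ℝ ∞ φ)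
    (hφ0 : φ 0 = 0) (hg : ∀ k, pk k φ 0 = 0) (hG : Good (interp φ) K)
    {ρ : ℝ × (Fin r → ℝ) → ℂ} (hρ : ContDiff ℝ ∞ ρ) (hρ0 : ∀ t, ρ (t, 0) = 1)
    {X : Fin r → ℝ × (Fin r → ℝ) → ℂ} (hX : ∀ k, ContDiff ℝ ∞ (X k))
    (hXA : ∀ w, ∑ k, X k w * dd k (interp φ) w = ρ w * dt (interp φ) w)
    {H : Matrix (Fin r) (Fin r) ℂ} (hH : ∀ j k, H j k = pk j (pk k φ) 0) (t : ℝ) :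
    (cc t • H + ss t • (1 : Matrix (Fin r) (Fin r) ℂ)).det ≠ 0 ∧
    2 * ∑ k, dd k (X k) (t, 0) =
      ((cc t • H + ss t • (1 : Matrix (Fin r) (Fin r) ℂ))⁻¹ * (sc t • (1 - H))).trace := by
  have hHt : ∀ j k, (cc t • H + ss t • (1 : Matrix (Fin r) (Fin r) ℂ)) j k =
      dd j (dd k (interp φ)) (t, 0) := fun j k => by
    simp [dd_dd_interp hφ, hH, Matrix.one_apply]
  have hdet : (cc t • H + ss t • (1 : Matrix (Fin r) (Fin r) ℂ)).det ≠ 0 := by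
    convert hG.hess t using 2
    ext j k
    rw [hHt]; rfl
  refine ⟨hdet, ?_⟩
  have hsc : ContDiff ℝ ∞ sc := by
    unfold sc
    exact Complex.ofRealCLM.contDiff.comp
      ((contDiff_const.mul Real.contDiff_sin).mul Real.contDiff_cos)
  -- the time derivative of the phase is `sc t · (|θ|²/2 - φ)`
  set g : (Fin r → ℝ) → ℂ := fun θ => quad θ + (-1) * φ θ with hgdef
  have hneg : ContDiff ℝ ∞ fun w : ℝ × (Fin r → ℝ) => (-1 : ℂ) * φ w.2 :=
    sep_contDiff (c := fun _ => (-1 : ℂ)) contDiff_const hφ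
  have hgs : ContDiff ℝ ∞ g := quad_contDiff.add (contDiff_const.mul hφ)
  have hdt : dt (interp φ) = fun w => sc w.1 * g w.2 := by
    rw [dt_interp hφ]; ext w; simp only [hgdef]; ring
  have hpg : ∀ k, pk k g = fun θ => (θ k : ℂ) + (-1) * pk k φ θ := fun k => by
    ext θ
    simp only [hgdef, pk]
    rw [fderiv_fun_add (quad_contDiff.differentiable (by simp) θ)
      ((contDiff_const.mul hφ).differentiable (by simp) θ),
      fderiv_const_mul (hφ.differentiable (by simp) θ)]
    have := congrFun (pk_quad (r := r) k) θ
    simp only [pk] at this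
    simp [this]
  have hppg : ∀ j k, pk j (pk k g) 0 = (1 - H : Matrix (Fin r) (Fin r) ℂ) j k := fun j k => by
    rw [hpg, pk]
    rw [fderiv_fun_add ((coord_contDiff k).differentiable (by simp) 0)
      ((contDiff_const.mul (pk_contDiff hφ k)).differentiable (by simp) 0),
      fderiv_const_mul ((pk_contDiff hφ k).differentiable (by simp) 0)]
    have h1 := pk_coord (r := r) j k 0
    have h2 := hH j k
    rw [pk] at h1 h2
    simp [h1, h2, Matrix.one_apply, sub_eq_add_neg]
  have hg0 : g 0 = 0 := by simp [hgdef, quad, hφ0]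
  have hpg0 : ∀ k, pk k g 0 = 0 := fun k => by simp [hpg, hg]
  have hdg : ∀ j, dd j (dt (interp φ)) = fun w => sc w.1 * pk j g w.2 := fun j => by
    rw [hdt, dd_sep hsc hgs]
  have hdts : ContDiff ℝ ∞ (dt (interp φ)) := dt_contDiff hG.smooth
  have hdA : ∀ j, dd j (fun w => ρ w * dt (interp φ) w) =
      fun w => dd j ρ w * dt (interp φ) w + ρ w * dd j (dt (interp φ)) w := fun j => by
    ext w; exact dd_mul hρ hdts j w
  refine div_at_zero hG.smooth (hG.grad0 t) hX hXA hHt ?_ hdet (fun j => ?_) fun i j => ?_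
  · ext j k
    rw [Matrix.transpose_apply, hHt, hHt]
    simp only [dd_dd_interp hφ, pk_symm hφ j k, eq_comm]
  · rw [hdA]
    simp only [hdg]
    simp [hpg0, hdt, hg0]
  · rw [hdA, dd_add ((dd_contDiff hρ j).mul hdts) (hρ.mul (dd_contDiff hdts j))]
    simp only
    rw [dd_mul (dd_contDiff hρ j) hdts, dd_mul hρ (dd_contDiff hdts j)]
    simp only [hdg, hρ0]
    rw [dd_sep hsc (pk_contDiff hgs j)]
    simp [hdt, hg0, hpg0, hppg]

/-- Deforming the phase to the quadratic one: up to `O(lam^{-J})` the oscillatory integral gets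
multiplied by the exponential of a polynomial in `1 / lam`, whose constant term accounts for the
change of the Hessian determinant. -/
theorem osc_deform {φ : (Fin r → ℝ) → ℂ} {K : Set (Fin r → ℝ)} (hφ : ContDiff ℝ ∞ φ)
    (hφ0 : φ 0 = 0) (hg : ∀ k, pk k φ 0 = 0) (hG : Good (interp φ) K)
    {ρ : ℝ × (Fin r → ℝ) → ℂ} (hρ : Amp K ρ) (hρt : ∀ t θ, ρ (t, θ) = ρ (0, θ))
    (hρ0 : ∀ t, ρ (t, 0) = 1)
    {H : Matrix (Fin r) (Fin r) ℂ} (hH : ∀ j k, H j k = pk j (pk k φ) 0) (J : ℕ) :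
    ∃ (P : ℕ → ℂ) (C : ℝ), Complex.exp (P 0) ^ 2 = 1 / H.det ∧ ∀ lam : ℝ, 1 ≤ lam →
      ‖osc (interp φ) lam 0 ρ - Complex.exp (∑ j ∈ Finset.range J, P j * ((lam : ℂ)⁻¹) ^ j) *
        osc (interp φ) lam (π / 2) ρ‖ ≤ C * (lam⁻¹) ^ J := by
  have hA : Amp K fun w => ρ w * dt (interp φ) w := hρ.mul (dt_contDiff hG.smooth)
  obtain ⟨X, hX, hXA⟩ := exists_field hG hA fun t => by
    simp [dt_interp hφ, hφ0, quad]
  have hK := hG.cpt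
  have hD : Amp K fun w => ∑ k, dd k (X k) w :=
    Amp.sum fun k _ => (hX k).dd hK.isClosed k
  obtain ⟨b, R, hb, hb0, hR, hred⟩ := osc_reduce hG hρ hρ0 J _ hD
  obtain ⟨C₂, hC₂, hRb⟩ := osc_bound hG hR (π / 2)
  have hpi : (0 : ℝ) ≤ π / 2 := by positivity
  let Q : ℕ → ℝ → ℂ := fun j t => ∫ s in (0 : ℝ)..t, b j s
  have hQ : ∀ j t, HasDerivAt (Q j) (b j t) t := fun j t =>
    intervalIntegral.integral_hasDerivAt_right ((hb j).intervalIntegrable _ _)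
      ((hb j).stronglyMeasurableAtFilter _ _) (hb j).continuousAt
  have hQ0 : ∀ j, Q j 0 = 0 := fun j => intervalIntegral.integral_same
  have hQc : ∀ j, Continuous (Q j) := fun j =>
    continuous_iff_continuousAt.2 fun t => (hQ j t).continuousAt
  -- a bound on `[0, π/2]` for the exponents, uniform in `lam ≥ 1`
  choose B hB using fun j => isCompact_Icc.exists_bound_of_continuousOn (s := Icc (0 : ℝ) (π / 2))
    (hQc j).continuousOn
  have hdiv := div_interp hφ hφ0 hg hG hρ.smooth hρ0 (fun k => (hX k).smooth) hXA hH
  refine ⟨fun j => Q j (π / 2), Real.exp (∑ j ∈ Finset.range J, B j) * C₂ * (π / 2), ?_, ?_⟩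
  -- the Hessian determinant and `exp (2 Q₀)` solve the same linear equation
  · have hder : ∀ t, HasDerivAt (fun s : ℝ =>
        (cc s • H + ss s • (1 : Matrix (Fin r) (Fin r) ℂ)).det * Complex.exp (-2 * Q 0 s)) 0 t := by
      intro t
      have h1 := hasDerivAt_det_path H t (hdiv t).1
      have h2 := ((hQ 0 t).const_mul (-2 : ℂ)).cexp
      refine (h1.mul h2).congr_deriv ?_
      rw [← (hdiv t).2, hb0]
      ring
    have hc := is_const_of_deriv_eq_zero (fun t => (hder t).differentiableAt)
      (fun t => (hder t).deriv) 0 (π / 2)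
    simp only [cc, ss, hQ0, Real.cos_zero, Real.sin_zero, Real.cos_pi_div_two,
      Real.sin_pi_div_two] at hc
    simp at hc
    have hne : H.det ≠ 0 := by rw [hc]; exact Complex.exp_ne_zero _
    rw [hc, ← Complex.exp_nat_mul, one_div, ← Complex.exp_neg]
    push_cast
    congr 1
    ring
  · intro lam hlam
    have hlam0 : 0 < lam := by linarith
    have hx0 : 0 ≤ lam⁻¹ := by positivity
    have hx1 : lam⁻¹ ≤ 1 := inv_le_one_of_one_le₀ hlam
    let S : ℝ → ℂ := fun t => ∑ j ∈ Finset.range J, Q j t * ((lam : ℂ)⁻¹) ^ j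
    have hS : ∀ t, HasDerivAt S (∑ j ∈ Finset.range J, b j t * ((lam : ℂ)⁻¹) ^ j) t := fun t =>
      HasDerivAt.fun_sum fun j _ => (hQ j t).mul_const _
    have hF : ∀ t, HasDerivAt (fun s => osc (interp φ) lam s ρ)
        (-((∑ j ∈ Finset.range J, b j t * ((lam : ℂ)⁻¹) ^ j) * osc (interp φ) lam t ρ +
          ((lam : ℂ)⁻¹) ^ J * osc (interp φ) lam t R)) t := fun t => by
      have h := osc_hasDerivAt hK hG.smooth hρ hρt lam t
      rw [← hred lam t hlam0, ← osc_field hK hG.smooth hX]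
      rw [funext hXA, ← neg_mul]
      exact h
    have hEF : ∀ t, HasDerivAt (fun s => Complex.exp (S s) * osc (interp φ) lam s ρ)
        (-(Complex.exp (S t) * (((lam : ℂ)⁻¹) ^ J * osc (interp φ) lam t R))) t := fun t => by
      refine ((hS t).cexp.mul (hF t)).congr_deriv ?_
      ring
    have hSb : ∀ t ∈ Icc (0 : ℝ) (π / 2), ‖Complex.exp (S t)‖ ≤
        Real.exp (∑ j ∈ Finset.range J, B j) := fun t ht => by
      rw [Complex.norm_exp]
      refine Real.exp_le_exp.2 ((Complex.re_le_norm _).trans ((norm_sum_le _ _).trans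
        (Finset.sum_le_sum fun j _ => ?_)))
      rw [norm_mul, norm_pow, norm_inv, Complex.norm_real, Real.norm_of_nonneg hlam0.le]
      exact (mul_le_of_le_one_right (norm_nonneg _) (pow_le_one₀ hx0 hx1)).trans (hB j t ht)
    have hfin := norm_image_sub_le_of_norm_deriv_le_segment'
      (C := Real.exp (∑ j ∈ Finset.range J, B j) * C₂ * (lam⁻¹) ^ J)
      (fun t (_ : t ∈ Icc (0 : ℝ) (π / 2)) => (hEF t).hasDerivWithinAt) (fun t ht => by
        have ht' := Ico_subset_Icc_self ht
        rw [norm_neg, norm_mul, norm_mul, norm_pow, norm_inv, Complex.norm_real,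
          Real.norm_of_nonneg hlam0.le, mul_assoc, mul_comm C₂]
        gcongr
        · exact hSb t ht'
        · exact hRb lam t hlam0.le ht') (π / 2) ⟨hpi, le_rfl⟩
    have hS0 : S 0 = 0 := by simp [S, hQ0]
    simp only [hS0, Complex.exp_zero, one_mul, sub_zero] at hfin
    rw [norm_sub_rev]
    refine hfin.trans (le_of_eq ?_)
    ring

/-! ### The Gaussian endpoint -/

theorem integrable_gauss {b : ℝ} (hb : 0 < b) :
    Integrable fun θ : Fin r → ℝ => Real.exp (-b * ∑ k, θ k ^ 2) := by
  have e : (fun θ : Fin r → ℝ => Real.exp (-b * ∑ k, θ k ^ 2)) =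
      fun θ => ∏ k, Real.exp (-b * θ k ^ 2) := by
    ext θ; rw [Finset.mul_sum, Real.exp_sum]
  rw [e]
  exact Integrable.fintype_prod (f := fun _ x => Real.exp (-b * x ^ 2))
    fun _ => integrable_exp_neg_mul_sq hb

theorem integral_gauss (b : ℝ) :
    ∫ θ : Fin r → ℝ, Real.exp (-b * ∑ k, θ k ^ 2) = √(π / b) ^ r := by
  have e : (fun θ : Fin r → ℝ => Real.exp (-b * ∑ k, θ k ^ 2)) =
      fun θ => ∏ k, Real.exp (-b * θ k ^ 2) := by
    ext θ; rw [Finset.mul_sum, Real.exp_sum]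
  rw [e, integral_fintype_prod_volume_eq_pow (fun x : ℝ => Real.exp (-b * x ^ 2)),
    integral_gaussian, Fintype.card_fin]

/-- For the quadratic phase the cut-off only matters up to an exponentially small error, and the
Gaussian integral is explicit. -/
theorem osc_gauss (φ : (Fin r → ℝ) → ℂ) {χ : (Fin r → ℝ) → ℝ} (hχ : Continuous χ)
    (hχ1 : ∃ δ > 0, ∀ θ ∈ Metric.closedBall 0 δ, χ θ = 1) (hχ01 : ∀ θ, 0 ≤ χ θ ∧ χ θ ≤ 1) (J : ℕ) :
    ∃ C : ℝ, ∀ lam : ℝ, 1 ≤ lam →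
      ‖osc (interp φ) lam (π / 2) (fun w => (χ w.2 : ℂ)) - ((√(2 * π / lam) ^ r : ℝ) : ℂ)‖ ≤
        C * (lam⁻¹) ^ J := by
  obtain ⟨δ, hδ, hχδ⟩ := hχ1
  refine ⟨(J.factorial / (δ ^ 2 / 4) ^ J) * √(π / (1 / 4)) ^ r, fun lam hlam => ?_⟩
  have hlam0 : 0 < lam := by linarith
  have hosc : osc (interp φ) lam (π / 2) (fun w => (χ w.2 : ℂ)) =
      ((∫ θ : Fin r → ℝ, χ θ * Real.exp (-(lam / 2) * ∑ k, θ k ^ 2) : ℝ) : ℂ) := by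
    rw [← integral_complex_ofReal]
    unfold osc
    congr 1
    ext θ
    simp only [interp, cc, ss, Real.cos_pi_div_two, Real.sin_pi_div_two, quad]
    push_cast
    congr 2
    rw [← Finset.sum_div]
    ring
  have hgi := integrable_gauss (r := r) (b := lam / 2) (by positivity)
  have hχi : Integrable fun θ : Fin r → ℝ => χ θ * Real.exp (-(lam / 2) * ∑ k, θ k ^ 2) := by
    refine hgi.mono' (hχ.aestronglyMeasurable.mul hgi.1) (Eventually.of_forall fun θ => ?_)
    rw [norm_mul, Real.norm_of_nonneg (hχ01 θ).1, Real.norm_of_nonneg (Real.exp_nonneg _)]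
    exact mul_le_of_le_one_left (Real.exp_nonneg _) (hχ01 θ).2
  have hmain : √(2 * π / lam) ^ r = ∫ θ : Fin r → ℝ, Real.exp (-(lam / 2) * ∑ k, θ k ^ 2) := by
    rw [integral_gauss]
    congr 2
    field_simp
  rw [hosc, hmain, ← Complex.ofReal_sub, Complex.norm_real, ← integral_sub hχi hgi]
  have hexp : Real.exp (-(lam * (δ ^ 2 / 4))) ≤ J.factorial / (δ ^ 2 / 4) ^ J * (lam⁻¹) ^ J := by
    have h := Real.pow_div_factorial_le_exp (lam * (δ ^ 2 / 4)) (by positivity) J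
    rw [Real.exp_neg, inv_le_comm₀ (Real.exp_pos _) (by positivity)]
    refine le_trans (le_of_eq ?_) h
    rw [inv_pow]
    field_simp
    rw [← mul_pow]
    congr 1
    ring
  have hpt : ∀ θ : Fin r → ℝ, ‖χ θ * Real.exp (-(lam / 2) * ∑ k, θ k ^ 2) -
      Real.exp (-(lam / 2) * ∑ k, θ k ^ 2)‖ ≤
      Real.exp (-(lam * (δ ^ 2 / 4))) * Real.exp (-(1 / 4) * ∑ k, θ k ^ 2) := fun θ => by
    by_cases hθ : θ ∈ Metric.closedBall 0 δ
    · rw [hχδ θ hθ]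
      simp only [one_mul, sub_self, norm_zero]
      positivity
    · have hq : δ ^ 2 ≤ ∑ k, θ k ^ 2 := by
        rw [mem_closedBall_zero_iff, pi_norm_le_iff_of_nonneg hδ.le] at hθ
        push Not at hθ
        obtain ⟨k, hk⟩ := hθ
        refine le_trans ?_ (Finset.single_le_sum (f := fun k => θ k ^ 2)
          (fun _ _ => sq_nonneg _) (Finset.mem_univ k))
        rw [← sq_abs (θ k)]
        exact pow_le_pow_left₀ hδ.le hk.le 2
      rw [← sub_one_mul, norm_mul, Real.norm_of_nonneg (Real.exp_nonneg _), ← Real.exp_add]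
      refine (mul_le_of_le_one_left (Real.exp_nonneg _) ?_).trans (Real.exp_le_exp.2 ?_)
      · rw [Real.norm_eq_abs, abs_le]
        constructor <;> linarith [(hχ01 θ).1, (hχ01 θ).2]
      · have h0 : 0 ≤ δ ^ 2 := sq_nonneg δ
        nlinarith
  refine (norm_integral_le_of_norm_le ((integrable_gauss (r := r) (b := 1 / 4)
    (by norm_num)).const_mul _) (Eventually.of_forall hpt)).trans ?_
  rw [integral_const_mul, integral_gauss]
  calc _ ≤ (J.factorial / (δ ^ 2 / 4) ^ J * (lam⁻¹) ^ J) * √(π / (1 / 4)) ^ r := by gcongr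
    _ = _ := by ring

/-! ### Assembling the expansion -/

theorem taylor_zero_one {g : ℝ → ℂ} (hg : ContDiff ℝ ∞ g) (M : ℕ) :
    ∃ (c : ℕ → ℂ) (D : ℝ), c 0 = g 0 ∧ ∀ x ∈ Icc (0 : ℝ) 1,
      ‖g x - ∑ j ∈ Finset.range (M + 1), c j * (x : ℂ) ^ j‖ ≤ D * x ^ (M + 1) := by
  obtain ⟨D, hD⟩ := exists_taylor_mean_remainder_bound (f := g) (a := 0) (b := 1) (n := M)
    zero_le_one ((hg.of_le (by exact_mod_cast le_top)).contDiffOn)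
  refine ⟨fun j => ((j.factorial : ℝ)⁻¹ : ℝ) * iteratedDerivWithin j g (Icc 0 1) 0, D, by simp,
    fun x hx => ?_⟩
  have h := hD x hx
  rw [taylor_within_apply, sub_zero] at h
  refine le_trans (le_of_eq ?_) h
  congr 2
  refine Finset.sum_congr rfl fun j _ => ?_
  rw [Complex.real_smul]
  push_cast
  ring

/-- Bookkeeping of error terms: an integral `I` reduced to `F₀`, which is compared with `F₁`, which
is compared with the Gaussian integral, has an expansion in powers of `1 / lam`. -/
theorem combine {a P : ℕ → ℂ} {J M : ℕ} (hJ : J = r + M + 1) {I F₀ F₁ R : ℝ → ℂ}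
    {C₁ C₂ C₃ : ℝ}
    (h1 : ∀ lam : ℝ, 1 ≤ lam → I lam =
      (∑ j ∈ Finset.range J, a j * ((lam : ℂ)⁻¹) ^ j) * F₀ lam + ((lam : ℂ)⁻¹) ^ J * R lam)
    (hR : ∀ lam : ℝ, 1 ≤ lam → ‖R lam‖ ≤ C₁)
    (h2 : ∀ lam : ℝ, 1 ≤ lam → ‖F₀ lam -
      Complex.exp (∑ j ∈ Finset.range J, P j * ((lam : ℂ)⁻¹) ^ j) * F₁ lam‖ ≤ C₂ * (lam⁻¹) ^ J)
    (h3 : ∀ lam : ℝ, 1 ≤ lam →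
      ‖F₁ lam - ((√(2 * π / lam) ^ r : ℝ) : ℂ)‖ ≤ C₃ * (lam⁻¹) ^ J) :
    ∃ (c : ℕ → ℂ) (K : ℝ), c 0 = ((√(2 * π) ^ r : ℝ) : ℂ) * (a 0 * Complex.exp (P 0)) ∧
      ∀ lam : ℝ, 1 ≤ lam → ‖I lam -
        ∑ j ∈ Finset.range (M + 1), c j * ((√(lam⁻¹) ^ r * (lam⁻¹) ^ j : ℝ) : ℂ)‖ ≤
        K * (√(lam⁻¹) ^ r * (lam⁻¹) ^ (M + 1)) := by
  let p : ℝ → ℂ := fun x => ∑ j ∈ Finset.range J, a j * (x : ℂ) ^ j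
  let e : ℝ → ℂ := fun x => Complex.exp (∑ j ∈ Finset.range J, P j * (x : ℂ) ^ j)
  have hof : ContDiff ℝ ∞ (fun x : ℝ => (x : ℂ)) := Complex.ofRealCLM.contDiff
  have hpoly : ∀ q : ℕ → ℂ, ContDiff ℝ ∞ fun x : ℝ => ∑ j ∈ Finset.range J, q j * (x : ℂ) ^ j :=
    fun q => ContDiff.sum fun j _ => contDiff_const.mul (hof.pow j)
  have hp : ContDiff ℝ ∞ p := hpoly a
  have he : ContDiff ℝ ∞ e := (hpoly P).cexp
  obtain ⟨c, D, hc0, hc⟩ := taylor_zero_one (hp.mul he) M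
  obtain ⟨Cp, hCp⟩ := isCompact_Icc.exists_bound_of_continuousOn (s := Icc (0 : ℝ) 1)
    hp.continuous.continuousOn
  obtain ⟨Ce, hCe⟩ := isCompact_Icc.exists_bound_of_continuousOn (s := Icc (0 : ℝ) 1)
    he.continuous.continuousOn
  have hCp0 : 0 ≤ Cp := (norm_nonneg _).trans (hCp 0 ⟨le_rfl, zero_le_one⟩)
  have hCe0 : 0 ≤ Ce := (norm_nonneg _).trans (hCe 0 ⟨le_rfl, zero_le_one⟩)
  have hC1 : 0 ≤ C₁ := (norm_nonneg _).trans (hR 1 le_rfl)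
  have hC2 : 0 ≤ C₂ := by simpa using (norm_nonneg _).trans (h2 1 le_rfl)
  have hC3 : 0 ≤ C₃ := by simpa using (norm_nonneg _).trans (h3 1 le_rfl)
  refine ⟨fun j => ((√(2 * π) ^ r : ℝ) : ℂ) * c j,
    C₁ + Cp * C₂ + Cp * Ce * C₃ + √(2 * π) ^ r * D, ?_, fun lam hlam => ?_⟩
  · have hz : ∀ q : ℕ → ℂ, ∑ j ∈ Finset.range J, q j * ((0 : ℝ) : ℂ) ^ j = q 0 := fun q => by
      rw [hJ, Finset.sum_range_succ']
      simp
    simp only [hc0, p, e, hz]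
  · have hlam0 : 0 < lam := by linarith
    obtain ⟨x, rfl⟩ : ∃ x : ℝ, x⁻¹ = lam := ⟨lam⁻¹, inv_inv lam⟩
    simp only [inv_inv]
    have hx0 : 0 < x := inv_pos.1 hlam0
    have hx1 : x ≤ 1 := (one_le_inv₀ hx0).1 hlam
    have hxI : x ∈ Icc (0 : ℝ) 1 := ⟨hx0.le, hx1⟩
    have k1 := h1 _ hlam
    have kR := hR _ hlam
    have k2 := h2 _ hlam
    have k3 := h3 _ hlam
    have kc := hc x hxI
    rw [← Complex.ofReal_inv, inv_inv] at k1 k2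
    simp only [inv_inv, div_inv_eq_mul] at k2 k3
    change ‖p x * e x - _‖ ≤ _ at kc
    change I x⁻¹ = p x * F₀ x⁻¹ + _ at k1
    change ‖F₀ x⁻¹ - e x * F₁ x⁻¹‖ ≤ _ at k2
    rw [Real.sqrt_mul (by positivity), mul_pow] at k3
    set y : ℝ := √x ^ r with hy
    set z : ℝ := √(2 * π) ^ r with hz
    have hy0 : 0 ≤ y := by positivity
    have hz0 : 0 ≤ z := by positivity
    -- `x ≤ √x` on the unit interval, so `r` extra powers of `x` absorb the factor `√x ^ r`
    have hxJ : x ^ J ≤ y * x ^ (M + 1) := by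
      rw [hJ, add_assoc, pow_add]
      refine mul_le_mul_of_nonneg_right ?_ (by positivity)
      exact pow_le_pow_left₀ hx0.le (Real.le_sqrt_of_sq_le (by nlinarith)) r
    have hdecomp : I x⁻¹ - ∑ j ∈ Finset.range (M + 1), ((z : ℝ) : ℂ) * c j * ((y * x ^ j : ℝ) : ℂ) =
        (x : ℂ) ^ J * R x⁻¹ + p x * (F₀ x⁻¹ - e x * F₁ x⁻¹) +
        p x * e x * (F₁ x⁻¹ - ((z * y : ℝ) : ℂ)) +
        ((z * y : ℝ) : ℂ) * (p x * e x - ∑ j ∈ Finset.range (M + 1), c j * (x : ℂ) ^ j) := by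
      have : ∑ j ∈ Finset.range (M + 1), ((z : ℝ) : ℂ) * c j * ((y * x ^ j : ℝ) : ℂ) =
          ((z * y : ℝ) : ℂ) * ∑ j ∈ Finset.range (M + 1), c j * (x : ℂ) ^ j := by
        rw [Finset.mul_sum]
        refine Finset.sum_congr rfl fun j _ => ?_
        push_cast; ring
      rw [this, k1]; ring
    rw [hdecomp]
    have hxn : ‖(x : ℂ)‖ = x := by rw [Complex.norm_real, Real.norm_of_nonneg hx0.le]
    have b1 : ‖(x : ℂ) ^ J * R x⁻¹‖ ≤ x ^ J * C₁ := by
      rw [norm_mul, norm_pow, hxn]; gcongr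
    have b2 : ‖p x * (F₀ x⁻¹ - e x * F₁ x⁻¹)‖ ≤ Cp * (C₂ * x ^ J) := by
      rw [norm_mul]; gcongr; exact hCp x hxI
    have b3 : ‖p x * e x * (F₁ x⁻¹ - ((z * y : ℝ) : ℂ))‖ ≤ Cp * Ce * (C₃ * x ^ J) := by
      rw [norm_mul, norm_mul]; gcongr
      · exact hCp x hxI
      · exact hCe x hxI
    have b4 : ‖((z * y : ℝ) : ℂ) * (p x * e x - ∑ j ∈ Finset.range (M + 1), c j * (x : ℂ) ^ j)‖ ≤
        z * y * (D * x ^ (M + 1)) := by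
      rw [norm_mul, Complex.norm_real, Real.norm_of_nonneg (by positivity)]; gcongr
    calc _ ≤ x ^ J * C₁ + Cp * (C₂ * x ^ J) + Cp * Ce * (C₃ * x ^ J) + z * y * (D * x ^ (M + 1)) :=
          (norm_add_le _ _).trans (add_le_add ((norm_add_le _ _).trans
            (add_le_add ((norm_add_le _ _).trans (add_le_add b1 b2)) b3)) b4)
      _ = (C₁ + Cp * C₂ + Cp * Ce * C₃) * x ^ J + z * D * (y * x ^ (M + 1)) := by ring
      _ ≤ (C₁ + Cp * C₂ + Cp * Ce * C₃) * (y * x ^ (M + 1)) + z * D * (y * x ^ (M + 1)) := by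
          gcongr
      _ = _ := by ring

/-- Restricting the path to `t = 0` and enlarging the compact set gives the constant family `φ`, with
room for amplitudes supported in `L`. -/
theorem good_const {φ : (Fin r → ℝ) → ℂ} (hφ : ContDiff ℝ ∞ φ) {K L : Set (Fin r → ℝ)}
    (hG : Good (interp φ) K) (hL : IsCompact L)
    (hLg : ∀ θ ∈ L, θ ≠ 0 → fderiv ℝ φ θ ≠ 0) (hLre : ∀ θ ∈ L, 0 ≤ (φ θ).re) :
    Good (fun w : ℝ × (Fin r → ℝ) => φ w.2) (L ∪ K) := by
  have hc0 : cc 0 = 1 := by simp [cc]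
  have hs0 : ss 0 = 0 := by simp [ss]
  have hd : ∀ k t θ, dd k (fun w : ℝ × (Fin r → ℝ) => φ w.2) (t, θ) = dd k (interp φ) (0, θ) :=
    fun k t θ => by
      rw [dd_snd hφ, dd_interp hφ]
      simp [hc0, hs0]
  refine ⟨hφ.comp contDiff_snd, hL.union hG.cpt, mem_of_superset hG.nhd subset_union_right,
    fun t k => (hd k t 0).trans (hG.grad0 0 k), ?_, fun t => ?_, ?_⟩
  · rintro t θ (hθ | hθ) h0
    · by_contra! hcon
      refine hLg θ hθ h0 (fderiv_eq_zero_of_pk fun k => ?_)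
      have := hcon k
      rwa [dd_snd hφ] at this
    · simp only [hd]
      exact hG.grad 0 θ hθ h0
  · convert hG.hess 0 using 3
    ext j k
    rw [dd_snd hφ, dd_snd (pk_contDiff hφ k), dd_dd_interp hφ]
    simp [hc0, hs0]
  · rintro t θ (hθ | hθ)
    · exact hLre θ hθ
    · simpa [interp, hc0, hs0] using hG.re 0 θ hθ

end FourierLaplace

open FourierLaplace in
/-- Fourier–Laplace asymptotic expansion (Hörmander; Pemantle–Wilson). -/
theorem fourier_laplace_expansion
    (r : ℕ) (N : Set (Fin r → ℝ)) (hN : IsOpen N) (hN0 : (0 : Fin r → ℝ) ∈ N)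
    (A φ : (Fin r → ℝ) → ℂ)
    (hA : ContDiff ℝ (⊤ : ℕ∞) A) (hφ : ContDiff ℝ (⊤ : ℕ∞) φ)
    (hAsupp : HasCompactSupport A) (hAsuppN : tsupport A ⊆ N)
    (hφ0 : φ 0 = 0)
    (hgrad0 : fderiv ℝ φ 0 = 0)
    (hgrad : ∀ θ ∈ tsupport A, θ ≠ 0 → fderiv ℝ φ θ ≠ 0)
    (H : Matrix (Fin r) (Fin r) ℂ)
    (hH : ∀ u v, H u v = pd u (pd v φ) 0)
    (hHdet : H.det ≠ 0)
    (hRe : ∀ θ ∈ N, 0 ≤ (φ θ).re) :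
    ∀ M : ℕ, ∃ (c : Fin (M + 1) → ℂ) (K : ℝ),
      (c 0) ^ 2 = (((2 * π) ^ r : ℝ) : ℂ) * (A 0) ^ 2 / H.det ∧
      ∀ n : ℕ, 1 ≤ n →
        ‖(∫ θ : Fin r → ℝ, A θ * Complex.exp (-(n : ℂ) * φ θ)) -
            ∑ j : Fin (M + 1), c j * (((n : ℝ) ^ (-(r : ℝ) / 2 - (j : ℝ)) : ℝ) : ℂ)‖ ≤
          K * (n : ℝ) ^ (-(r : ℝ) / 2 - (M : ℝ) - 1) := by
  intro M
  have hH' : ∀ j k, H j k = pk j (pk k φ) 0 := fun j k => by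
    rw [hH, pd_eq_pk hφ, pd_eq_pk (pk_contDiff hφ k)]
  have hg : ∀ k, pk k φ 0 = 0 := fun k => by simp [pk, hgrad0]
  have hdet : (Matrix.of fun j k => pk j (pk k φ) 0).det ≠ 0 := by
    convert hHdet using 2
    ext j k
    exact (hH' j k).symm
  obtain ⟨ε, hε, hG, -⟩ := exists_good hφ (hN.mem_nhds hN0) hφ0 hg hRe hdet
  obtain ⟨χ, hχ, hχs, hχ1, hχ01⟩ := exists_bump (r := r) hε
  have hχc : ContDiff ℝ (⊤ : ℕ∞) fun w : ℝ × (Fin r → ℝ) => (χ w.2 : ℂ) :=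
    Complex.ofRealCLM.contDiff.comp (hχ.comp contDiff_snd)
  have hχ0 : χ 0 = 1 := by
    obtain ⟨δ, hδ, h⟩ := hχ1
    exact h 0 (Metric.mem_closedBall_self hδ.le)
  have hG1 := good_const hφ hG hAsupp hgrad fun θ hθ => hRe θ (hAsuppN hθ)
  have hρ : Amp (Metric.closedBall 0 ε) fun w : ℝ × (Fin r → ℝ) => (χ w.2 : ℂ) :=
    ⟨hχc, fun t θ hθ => by simp [hχs θ hθ]⟩
  have hρ1 : Amp (tsupport A ∪ Metric.closedBall 0 ε)
      fun w : ℝ × (Fin r → ℝ) => (χ w.2 : ℂ) :=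
    ⟨hχc, fun t θ hθ => hρ.supp t θ fun h => hθ (Or.inr h)⟩
  have hA1 : Amp (tsupport A ∪ Metric.closedBall 0 ε) fun w : ℝ × (Fin r → ℝ) => A w.2 :=
    ⟨hA.comp contDiff_snd, fun t θ hθ => image_eq_zero_of_notMem_tsupport fun h => hθ (Or.inl h)⟩
  -- the constant family `φ` on `tsupport A ∪ closedBall 0 ε` replaces `A` by the bump `χ`, which lives
  -- in the ball where the deformation to the quadratic phase is available
  obtain ⟨a, R, -, ha0, hR, hred⟩ := osc_reduce hG1 hρ1 (fun t => by simp [hχ0]) (r + M + 1) _ hA1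
  obtain ⟨C₁, -, hC₁⟩ := osc_bound hG1 hR 0
  obtain ⟨P, C₂, hP, hC₂⟩ := osc_deform hφ hφ0 hg hG hρ (fun _ _ => rfl) (fun t => by simp [hχ0])
    hH' (r + M + 1)
  obtain ⟨C₃, hC₃⟩ := osc_gauss φ hχ.continuous hχ1 hχ01 (r + M + 1)
  have hsame : ∀ (lam : ℝ) B, osc (fun w : ℝ × (Fin r → ℝ) => φ w.2) lam 0 B =
      osc (interp φ) lam 0 B := fun lam B => by
    simp [osc, interp, cc, ss]
  obtain ⟨c, K, hc0, hc⟩ := combine (r := r) (M := M) rfl (a := fun j => a j 0) (P := P)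
    (fun lam hlam => hred lam 0 (by linarith))
    (fun lam hlam => hC₁ lam 0 (by linarith) ⟨le_rfl, le_rfl⟩)
    (fun lam hlam => by rw [hsame]; exact hC₂ lam hlam) hC₃
  refine ⟨fun j => c j, K, ?_, fun n hn => ?_⟩
  · simp only [Fin.val_zero, hc0, ha0]
    rw [mul_pow, mul_pow, hP, ← Complex.ofReal_pow, ← pow_mul, mul_comm r 2, pow_mul,
      Real.sq_sqrt (by positivity)]
    ring
  · have hn1 : (1 : ℝ) ≤ n := by exact_mod_cast hn
    have hn0 : (0 : ℝ) < n := by linarith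
    have hpow : ∀ j : ℕ, (n : ℝ) ^ (-(r : ℝ) / 2 - (j : ℝ)) = √((n : ℝ)⁻¹) ^ r * ((n : ℝ)⁻¹) ^ j := by
      intro j
      rw [Real.rpow_sub hn0, Real.rpow_natCast, Real.sqrt_eq_rpow, ← Real.rpow_natCast _ r,
        ← Real.rpow_mul (by positivity), Real.inv_rpow hn0.le, ← Real.rpow_neg hn0.le, inv_pow,
        div_eq_mul_inv]
      congr 2
      ring
    have h := hc n hn1
    have e1 : (n : ℝ) ^ (-(r : ℝ) / 2 - (M : ℝ) - 1) =
        √((n : ℝ)⁻¹) ^ r * ((n : ℝ)⁻¹) ^ (M + 1) := by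
      rw [← hpow]; push_cast; congr 1; ring
    rw [e1, Fin.sum_univ_eq_sum_range
      (fun j => c j * (((n : ℝ) ^ (-(r : ℝ) / 2 - (j : ℝ)) : ℝ) : ℂ)) (M + 1)]
    simp only [hpow]
    simpa only [osc, Complex.ofReal_natCast] using h
end
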